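/- Let a ≥ 0 and let (q,r) be an a-admissible pair, with conjugate exponents q', r'. There exists a constant C(a,r) > 0 such that for every F ∈ 𝕊⁺, the function T_a(F)(x) = ∫_ℝ ∫₀^∞ S_a(x,y,−t) F(y,t) y^a dy dt satisfies ‖T_a(F)‖_{L²_a} ≤ C(a,r) ‖F‖_{L^{q'}_t L^{r'}_a}. -/

import Mathlib

open MeasureTheory Filter Set

noncomputable def besselJ (ν : ℂ) (z : ℝ) : ℂ :=
  ∑' k : ℕ, ((-1 : ℂ) ^ k / (Complex.Gamma (k + 1) * Complex.Gamma (ν + k + 1))) *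
    ((z : ℂ) / 2) ^ (2 * (k : ℂ) + ν)

noncomputable def Skernel (a x y t : ℝ) : ℂ :=
  if 0 < t then
    Complex.exp (-(Complex.I) * (((a + 1) * Real.pi / 4 : ℝ) : ℂ)) *
      (((2 * |t|) ^ (-(a + 1) / 2) : ℝ) : ℂ) *
      (((x * y / (2 * |t|)) ^ ((1 - a) / 2) : ℝ) : ℂ) *
      besselJ (((a - 1) / 2 : ℝ) : ℂ) (x * y / (2 * |t|)) *
      Complex.exp (Complex.I * ((((x ^ 2 + y ^ 2) / (4 * |t|)) : ℝ) : ℂ))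
  else
    Complex.exp ((Complex.I) * (((a + 1) * Real.pi / 4 : ℝ) : ℂ)) *
      (((2 * |t|) ^ (-(a + 1) / 2) : ℝ) : ℂ) *
      (((x * y / (2 * |t|)) ^ ((1 - a) / 2) : ℝ) : ℂ) *
      besselJ (((a - 1) / 2 : ℝ) : ℂ) (x * y / (2 * |t|)) *
      Complex.exp (-(Complex.I) * ((((x ^ 2 + y ^ 2) / (4 * |t|)) : ℝ) : ℂ))

noncomputable def LrA (a r : ℝ) (f : ℝ → ℂ) : ℝ :=
  (∫ x in Ioi (0:ℝ), ‖f x‖ ^ r * x ^ a) ^ (1 / r)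

noncomputable def mixedNorm (a q r : ℝ) (u : ℝ → ℝ → ℂ) : ℝ :=
  (∫ t : ℝ, LrA a r (fun x => u x t) ^ q) ^ (1 / q)

def Admissible (a q r : ℝ) : Prop :=
  2 < r ∧ (1 < a → r < 2 * (a + 1) / (a - 1)) ∧ 2 / q = (a + 1) * (1 / 2 - 1 / r)

noncomputable def DxIter : ℕ → (ℝ → ℝ → ℂ) → (ℝ → ℝ → ℂ)
  | 0, F => F
  | k + 1, F => fun x t => (1 / (x : ℂ)) * deriv (fun x' => DxIter k F x' t) x

noncomputable def DtIter (l : ℕ) (F : ℝ → ℝ → ℂ) : ℝ → ℝ → ℂ :=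
  fun x t => iteratedDeriv l (fun t' => F x t') t

def SPlusT (F : ℝ → ℝ → ℂ) : Prop :=
  ContDiffOn ℝ (⊤ : ℕ∞) (fun p : ℝ × ℝ => F p.1 p.2) (Ioi 0 ×ˢ univ) ∧
  ∀ p : ℕ, ∃ C : ℝ, ∀ k l : ℕ, k + l ≤ p → ∀ x > (0:ℝ), ∀ t : ℝ,
    (1 + x ^ 2 + t ^ 2) ^ ((p : ℝ) / 2) * ‖DxIter k (DtIter l F) x t‖ ≤ C

/-!
The proof is a `T T*` argument carried out with the Gaussian weight `exp (-δ x²)` on the output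
side. Weber's second exponential integral evaluates the weighted Gram kernel
`∫ exp (-δ x²) S_a(x, y, -t) conj (S_a(x, y', -s)) x^a dx` in closed form, and the energy bound
`|J_ν(z)| ≤ (|z| / 2)^ν exp |Im z| / Γ(ν + 1)`, `ν ≥ -1/2`, bounds it by a multiple of
`|t - s| ^ (-(ν + 1))`, uniformly in `δ`; here `a = 2ν + 1`. On the diagonal `t = s` the Gram kernel
has absolute row sums `1`, so Schur's test gives the `L²` contraction. Interpolating the two bounds
and summing in time with the Hardy–Littlewood–Sobolev inequality controls `‖T_a F‖²`, and Fatou's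
lemma removes the weight.
-/

open scoped ComplexConjugate

/-- The Bessel–Clifford function `C_ν(u) = ∑ uᵏ / (k! Γ(ν + 1 + k))`: the entire function with
`J_ν(z) = (z / 2) ^ ν * C_ν(-(z / 2) ^ 2)`. -/
noncomputable def besselClifford (ν u : ℂ) : ℂ :=
  Complex.regularizedHGFun 0 {ν + 1} u

section BesselClifford

open scoped Nat

variable (ν u : ℂ)

theorem hasFPowerSeriesOnBall_besselClifford :
    HasFPowerSeriesOnBall (besselClifford ν) (Complex.regularizedHGFunSeries 0 {ν + 1}) 0 ⊤ := by
  have hr := Complex.radius_regularizedHGFunSeries_eq_top (a := 0) (b := {ν + 1}) (by simp)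
  rw [← hr]
  exact FormalMultilinearSeries.hasFPowerSeriesOnBall _ (by simp [hr])

theorem hasSum_besselClifford :
    HasSum (fun k : ℕ => u ^ k / (k ! * Complex.Gamma (ν + 1 + k))) (besselClifford ν u) := by
  have h := (hasFPowerSeriesOnBall_besselClifford ν).hasSum (y := u) (by simp)
  rw [zero_add] at h
  refine h.congr_fun fun k => ?_
  simp [Complex.regularizedHGFunCoeff, div_eq_mul_inv]

theorem besselClifford_zero : besselClifford ν 0 = (Complex.Gamma (ν + 1))⁻¹ := by
  refine (hasSum_besselClifford ν 0).unique ?_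
  convert hasSum_ite_eq (0 : ℕ) (Complex.Gamma (ν + 1))⁻¹ using 2 with k
  rcases eq_or_ne k 0 with rfl | hk <;> simp [*]

theorem norm_besselClifford_zero {ν : ℝ} (hν : -1 < ν) :
    ‖besselClifford ν 0‖ = (Real.Gamma (ν + 1))⁻¹ := by
  have : 0 < Real.Gamma (ν + 1) := Real.Gamma_pos_of_pos (by linarith)
  rw [besselClifford_zero, ← Complex.ofReal_one, ← Complex.ofReal_add, Complex.Gamma_ofReal,
    norm_inv, Complex.norm_of_nonneg this.le]

theorem hasDerivAt_besselClifford :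
    HasDerivAt (besselClifford ν) (besselClifford (ν + 1) u) u := by
  have hC := hasFPowerSeriesOnBall_besselClifford ν
  have hd := (hC.fderiv.hasSum (y := u) (by simp)).mapL (ContinuousLinearMap.apply ℂ ℂ 1)
  have hderiv : deriv (besselClifford ν) u = besselClifford (ν + 1) u := by
    rw [zero_add] at hd
    refine hd.unique ((hasSum_besselClifford (ν + 1) u).congr_fun fun k => ?_)
    have hk : ν + 1 + (k + 1 : ℂ) = ν + 1 + 1 + k := by ring
    have : (k + 1 : ℂ) ≠ 0 := mod_cast k.succ_ne_zero
    simp only [ContinuousLinearMap.apply_apply, FormalMultilinearSeries.apply_eq_pow_smul_coeff,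
      smul_apply, FormalMultilinearSeries.derivSeries_coeff_one, smul_eq_mul,
      nsmul_eq_mul]
    simp only [Nat.cast_add, Nat.cast_one, Complex.regularizedHGFunSeries_coeff,
      Complex.regularizedHGFunCoeff, Multiset.map_zero, Multiset.prod_zero, Nat.factorial_succ,
      Nat.cast_mul, Multiset.map_singleton, hk, Multiset.prod_singleton]
    field_simp
  rw [← hderiv]
  exact (hC.analyticAt_of_mem (by simp)).differentiableAt.hasDerivAt

theorem continuous_besselClifford : Continuous (besselClifford ν) :=
  continuous_iff_continuousAt.2 fun u => (hasDerivAt_besselClifford ν u).continuousAt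

theorem besselClifford_recurrence :
    u * besselClifford (ν + 2) u + (ν + 1) * besselClifford (ν + 1) u = besselClifford ν u := by
  have hshift : HasSum (fun k : ℕ => k * (u ^ k / (k ! * Complex.Gamma (ν + 2 + k))))
      (u * besselClifford (ν + 2) u) := by
    refine (hasSum_nat_add_iff' 1).1 ?_
    rw [Finset.sum_range_one, Nat.cast_zero, zero_mul, sub_zero]
    refine ((hasSum_besselClifford (ν + 2) u).mul_left u).congr_fun fun k => ?_
    have : (k ! : ℂ) ≠ 0 := mod_cast k.factorial_ne_zero
    have : (k + 1 : ℂ) ≠ 0 := mod_cast k.succ_ne_zero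
    rw [Nat.factorial_succ, show ν + 2 + (k + 1 : ℕ) = ν + 2 + 1 + k by push_cast; ring]
    push_cast
    field_simp
    ring
  refine (hshift.add ((hasSum_besselClifford (ν + 1) u).mul_left (ν + 1))).unique
    ((hasSum_besselClifford ν u).congr_fun fun k => ?_)
  have hΓ := Complex.one_div_Gamma_eq_self_mul_one_div_Gamma_add_one (ν + 1 + k)
  rw [show ν + 1 + k + 1 = ν + 2 + k by ring] at hΓ
  rw [show ν + 1 + 1 + k = ν + 2 + k by ring]
  simp only [div_eq_mul_inv, mul_inv] at hΓ ⊢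
  rw [hΓ]
  ring

theorem conj_besselClifford : conj (besselClifford ν u) = besselClifford (conj ν) (conj u) := by
  refine ((hasSum_besselClifford ν u).map (starRingEnd ℂ) Complex.continuous_conj).unique
    ((hasSum_besselClifford _ _).congr_fun fun k => ?_)
  simp [← Complex.Gamma_conj]

theorem ofReal_norm_besselClifford {ν x : ℝ} (hν : -1 < ν) (hx : 0 ≤ x) :
    (‖besselClifford ν x‖ : ℂ) = besselClifford ν x := by
  have hsum := hasSum_besselClifford ν x
  have hterm (k : ℕ) : (x : ℂ) ^ k / (k ! * Complex.Gamma (ν + 1 + k)) =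
      (x ^ k / (k ! * Real.Gamma (ν + 1 + k)) : ℝ) := by
    push_cast [← Complex.Gamma_ofReal]
    rfl
  have hnonneg : 0 ≤ ∑' k : ℕ, x ^ k / (k ! * Real.Gamma (ν + 1 + k)) := by
    refine tsum_nonneg fun k => div_nonneg (by positivity) (mul_nonneg (by positivity) ?_)
    exact (Real.Gamma_pos_of_pos (add_pos_of_pos_of_nonneg (by linarith) (by positivity))).le
  simp_rw [hterm] at hsum
  rw [← hsum.tsum_eq, ← Complex.ofReal_tsum, Complex.norm_real, Real.norm_of_nonneg hnonneg]

theorem besselJ_eq_cpow_mul_besselClifford {z : ℝ} (hz : 0 < z) :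
    besselJ ν z = ((z / 2 : ℝ) : ℂ) ^ ν * besselClifford ν (-(z / 2) ^ 2) := by
  rw [besselJ, ← (hasSum_besselClifford ν _).tsum_eq, ← tsum_mul_left]
  refine tsum_congr fun k => ?_
  have hz2 : (z / 2 : ℂ) ≠ 0 := by simpa using hz.ne'
  rw [Complex.cpow_add _ _ hz2, show (2 * k : ℂ) = (2 * k : ℕ) by push_cast; rfl,
    Complex.cpow_natCast, pow_mul, neg_pow ((z / 2 : ℂ) ^ 2), Complex.Gamma_nat_eq_factorial,
    add_right_comm]
  push_cast
  ring

end BesselClifford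

section EnergyEstimate

theorem le_mul_exp_of_hasDerivAt_le {f f' : ℝ → ℝ} {K t : ℝ} (ht : 0 ≤ t)
    (hf : ∀ s, HasDerivAt f (f' s) s) (hle : ∀ s, 0 ≤ s → f' s ≤ K * f s) :
    f t ≤ f 0 * Real.exp (K * t) := by
  have hderiv (s : ℝ) : HasDerivAt (fun s => f s * Real.exp (-(K * s)))
      (f' s * Real.exp (-(K * s)) + f s * (Real.exp (-(K * s)) * -(K * 1))) s :=
    (hf s).mul ((hasDerivAt_id s).const_mul K).neg.exp
  have hanti : AntitoneOn (fun s => f s * Real.exp (-(K * s))) (Ici 0) := by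
    refine antitoneOn_of_hasDerivWithinAt_nonpos (convex_Ici 0)
      (fun s _ => (hderiv s).continuousAt.continuousWithinAt)
      (fun s _ => (hderiv s).hasDerivWithinAt) fun s hs => ?_
    rw [interior_Ici] at hs
    nlinarith [hle s hs.le, Real.exp_pos (-(K * s))]
  have hle0 := hanti self_mem_Ici ht ht
  simp only [mul_zero, neg_zero, Real.exp_zero, mul_one, Real.exp_neg] at hle0
  exact (mul_inv_le_iff₀ (Real.exp_pos _)).1 hle0

theorem hasDerivAt_besselClifford_sq (ν z : ℂ) :
    HasDerivAt (fun z => besselClifford ν (z ^ 2 / 4))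
      (z / 2 * besselClifford (ν + 1) (z ^ 2 / 4)) z := by
  have h := (hasDerivAt_besselClifford ν (z ^ 2 / 4)).comp z ((hasDerivAt_pow 2 z).div_const 4)
  exact h.congr_deriv (by ring)

theorem hasDerivAt_mul_besselClifford_sq (ν z : ℂ) :
    HasDerivAt (fun z => z / 2 * besselClifford (ν + 1) (z ^ 2 / 4))
      (besselClifford ν (z ^ 2 / 4) - (ν + 1 / 2) * besselClifford (ν + 1) (z ^ 2 / 4)) z := by
  have h := ((hasDerivAt_id z).div_const 2).mul (hasDerivAt_besselClifford_sq (ν + 1) z)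
  refine h.congr_deriv ?_
  have hrec := besselClifford_recurrence ν (z ^ 2 / 4)
  rw [← hrec, show ν + 1 + 1 = ν + 2 by ring, id]
  ring

open scoped InnerProductSpace in
theorem inner_mul_add_inner_mul_le (ζ x y : ℂ) :
    ⟪x, ζ * y⟫_ℝ + ⟪y, ζ * x⟫_ℝ ≤ |ζ.re| * (‖x‖ ^ 2 + ‖y‖ ^ 2) := by
  have heq : ⟪x, ζ * y⟫_ℝ + ⟪y, ζ * x⟫_ℝ = ζ.re * (2 * ⟪x, y⟫_ℝ) := by
    simp only [Complex.inner, Complex.mul_re, Complex.mul_im, Complex.conj_re, Complex.conj_im]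
    ring
  have hinner : |2 * ⟪x, y⟫_ℝ| ≤ ‖x‖ ^ 2 + ‖y‖ ^ 2 := by
    rw [abs_mul, abs_two]
    nlinarith [abs_real_inner_le_norm x y, sq_nonneg (‖x‖ - ‖y‖)]
  rw [heq]
  exact (le_abs_self _).trans (by rw [abs_mul]; gcongr)

/- With `X = C_ν(z² / 4)` and `Y = (z / 2) C_{ν + 1}(z² / 4)` on the ray `z = sζ`, the energy
`|X|² + |Y|²` grows at rate at most `2 |Re ζ|`: the only other term in its derivative is
`-(ν + 1 / 2) s |ζ C_{ν + 1}|²`. -/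
theorem norm_besselClifford_sq_le {ν : ℝ} (hν : -1 / 2 ≤ ν) (ζ : ℂ) :
    ‖besselClifford ν (ζ ^ 2 / 4)‖ ≤ (Real.Gamma (ν + 1))⁻¹ * Real.exp |ζ.re| := by
  set X : ℝ → ℂ := fun s => besselClifford ν ((s * ζ) ^ 2 / 4)
  set Z : ℝ → ℂ := fun s => besselClifford (ν + 1) ((s * ζ) ^ 2 / 4)
  set Y : ℝ → ℂ := fun s => s * ζ / 2 * Z s
  have hray (s : ℝ) : HasDerivAt (fun s : ℝ => s * ζ) ζ s := by
    simpa using (Complex.ofRealCLM.hasDerivAt (x := s)).mul_const ζ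
  have hX (s : ℝ) : HasDerivAt X (ζ * Y s) s := by
    exact ((hasDerivAt_besselClifford_sq ν (s * ζ)).scomp s (hray s) :)
  have hY (s : ℝ) : HasDerivAt Y (ζ * (X s - (ν + 1 / 2) * Z s)) s := by
    exact ((hasDerivAt_mul_besselClifford_sq ν (s * ζ)).scomp s (hray s) :)
  have hdamping (s : ℝ) (hs : 0 ≤ s) : 0 ≤ inner ℝ (Y s) (ζ * ((ν + 1 / 2) * Z s)) := by
    have : inner ℝ (Y s) (ζ * ((ν + 1 / 2) * Z s)) = (ν + 1 / 2) * (s / 2) * ‖ζ * Z s‖ ^ 2 := by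
      rw [show ζ * ((ν + 1 / 2) * Z s) = (ν + 1 / 2 : ℝ) • (ζ * Z s) by simp; ring,
        show Y s = (s / 2 : ℝ) • (ζ * Z s) by simp [Y]; ring, real_inner_smul_left,
        real_inner_smul_right, real_inner_self_eq_norm_sq]
      ring
    rw [this]
    have : 0 ≤ ν + 1 / 2 := by linarith
    positivity
  have henergy := le_mul_exp_of_hasDerivAt_le zero_le_one
    (fun s => (hX s).norm_sq.add (hY s).norm_sq) (K := 2 * |ζ.re|) fun s hs => by
      have := inner_mul_add_inner_mul_le ζ (X s) (Y s)
      rw [mul_sub, inner_sub_right]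
      simp only [Pi.add_apply]
      linarith [hdamping s hs]
  have hX0 : ‖X 0‖ = (Real.Gamma (ν + 1))⁻¹ := by
    rw [← norm_besselClifford_zero (by linarith)]
    simp [X]
  have hX1 : X 1 = besselClifford ν (ζ ^ 2 / 4) := by simp [X]
  have hexp : Real.exp (2 * |ζ.re| * 1) = Real.exp |ζ.re| ^ 2 := by
    rw [mul_one, ← Real.exp_nat_mul, Nat.cast_ofNat]
  have hY0 : Y 0 = 0 := by simp [Y]
  simp only [Pi.add_apply, hX0, hX1, hY0, norm_zero, hexp] at henergy
  have : 0 < Real.Gamma (ν + 1) := Real.Gamma_pos_of_pos (by linarith)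
  refine abs_le_of_sq_le_sq' ?_ (by positivity) |>.2
  nlinarith [sq_nonneg ‖Y 1‖]

end EnergyEstimate

section Vandermonde

open scoped Nat

theorem add_natCast_re_pos {b : ℂ} (hb : 0 < b.re) (n : ℕ) : 0 < (b + n).re := by
  rw [Complex.add_re, Complex.natCast_re]
  positivity

theorem sum_choose_mul_descFactorial_div_Gamma (k l : ℕ) {b : ℂ} (hb : 0 < b.re) :
    ∑ m ∈ Finset.range (k + 1), (k.choose m * (l.descFactorial m / Complex.Gamma (b + m))) =
      Complex.Gamma (b + k + l) / (Complex.Gamma (b + k) * Complex.Gamma (b + l)) := by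
  induction k generalizing l b with
  | zero =>
    have := Complex.Gamma_ne_zero_of_re_pos (s := b + l)
      (add_natCast_re_pos hb l)
    simp [div_mul_cancel_right₀ this]
  | succ k ih =>
    have hshift (m : ℕ) : l.descFactorial (m + 1) / Complex.Gamma (b + (m + 1 : ℕ)) =
        l * ((l - 1).descFactorial m / Complex.Gamma (b + 1 + m)) := by
      rw [show b + (m + 1 : ℕ) = b + 1 + m by push_cast; ring]
      cases l with
      | zero => simp
      | succ l => rw [Nat.succ_descFactorial_succ, Nat.add_sub_cancel]; push_cast; ring
    have hcancel : l * (Complex.Gamma (b + 1 + k + (l - 1 : ℕ)) /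
          (Complex.Gamma (b + 1 + k) * Complex.Gamma (b + 1 + (l - 1 : ℕ)))) =
        l * (Complex.Gamma (b + k + l) / (Complex.Gamma (b + k + 1) * Complex.Gamma (b + l))) := by
      cases l with
      | zero => simp
      | succ l => simp [add_assoc, add_comm, add_left_comm]
    have hre : 0 < (b + k).re := add_natCast_re_pos hb k
    have hbk : b + k ≠ 0 := Complex.ne_zero_of_re_pos hre
    have hbkl : b + k + l ≠ 0 := Complex.ne_zero_of_re_pos (add_natCast_re_pos hre l)
    rw [Finset.sum_choose_succ_mul fun m _ => l.descFactorial m / Complex.Gamma (b + m)]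
    simp_rw [hshift, mul_left_comm _ (l : ℂ), ← Finset.mul_sum]
    rw [ih l hb, ih (l - 1) (mod_cast add_natCast_re_pos hb 1), hcancel, Nat.cast_succ, ← add_assoc,
      add_right_comm _ 1, Complex.Gamma_add_one _ hbk, Complex.Gamma_add_one _ hbkl]
    field_simp

theorem hasSum_mul_prod {ι κ : Type*} {f : ι → ℂ} {g : κ → ℂ} {s t : ℂ} (hf : HasSum f s)
    (hg : HasSum g t) : HasSum (fun x : ι × κ => f x.1 * g x.2) (s * t) :=
  hf.mul hg (summable_mul_of_summable_norm hf.summable.norm hg.summable.norm)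

/- Multiplying out the three series and collecting the powers `A ^ k * B ^ l` gives, in each
coefficient, the finite sum of `sum_choose_mul_descFactorial_div_Gamma`. -/
theorem hasSum_exp_add_mul_besselClifford_mul {ν : ℂ} (hν : -1 < ν.re) (A B : ℂ) :
    HasSum (fun p : ℕ × ℕ => A ^ p.1 / p.1! * (B ^ p.2 / p.2!) *
        (Complex.Gamma (ν + 1 + p.1 + p.2) /
          (Complex.Gamma (ν + 1 + p.1) * Complex.Gamma (ν + 1 + p.2))))
      (Complex.exp (A + B) * besselClifford ν (A * B)) := by
  let term : (ℕ × ℕ) × ℕ → ℂ := fun q => A ^ q.1.1 / q.1.1! * (B ^ q.1.2 / q.1.2!) *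
    (q.1.1.choose q.2 * (q.1.2.descFactorial q.2 / Complex.Gamma (ν + 1 + q.2)))
  let shift : (ℕ × ℕ) × ℕ → (ℕ × ℕ) × ℕ := fun q => ((q.1.1 + q.2, q.1.2 + q.2), q.2)
  have hterm : HasSum (term ∘ shift) (Complex.exp (A + B) * besselClifford ν (A * B)) := by
    have hexp (z : ℂ) : HasSum (fun k : ℕ => z ^ k / k !) (Complex.exp z) := by
      rw [Complex.exp_eq_exp_ℂ]
      exact NormedSpace.expSeries_div_hasSum_exp z
    have hprod := hasSum_mul_prod (hasSum_mul_prod (hexp A) (hexp B))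
      (hasSum_besselClifford ν (A * B))
    rw [← Complex.exp_add] at hprod
    refine hprod.congr_fun fun ⟨⟨i, j⟩, m⟩ => ?_
    have hi : ((i + m).choose m : ℂ) = (i + m)! / (i ! * m !) := by
      rw [add_comm, Nat.cast_add_choose, mul_comm]
    have hj : ((j + m).descFactorial m : ℂ) = (j + m)! / j ! := by
      rw [eq_div_iff (mod_cast j.factorial_ne_zero)]
      have := Nat.factorial_mul_descFactorial (Nat.le_add_left m j)
      rw [Nat.add_sub_cancel, mul_comm] at this
      exact_mod_cast this
    simp only [term, shift, Function.comp_apply, hi, hj]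
    have hfact (n : ℕ) : (n ! : ℂ) ≠ 0 := mod_cast n.factorial_ne_zero
    have := hfact (i + m)
    have := hfact (j + m)
    field_simp
    ring
  have hshift : Function.Injective shift := fun q q' h => by
    simp only [shift, Prod.mk.injEq] at h
    ext <;> omega
  refine HasSum.prod_fiberwise ((hshift.hasSum_iff fun q hq => ?_).1 hterm) fun p => ?_
  · have : q.1.1 < q.2 ∨ q.1.2 < q.2 := by
      by_contra! h
      exact hq ⟨((q.1.1 - q.2, q.1.2 - q.2), q.2), by simp [shift, h.1, h.2]⟩
    rcases this with h | h <;> simp [term, Nat.choose_eq_zero_of_lt, Nat.descFactorial_of_lt, h]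
  · rw [← sum_choose_mul_descFactorial_div_Gamma p.1 p.2 (by simp; linarith), Finset.mul_sum]
    refine hasSum_sum_of_ne_finset_zero fun m hm => ?_
    have : p.1 < m := by simpa [Nat.lt_succ_iff] using hm
    simp [term, Nat.choose_eq_zero_of_lt this]

end Vandermonde

section PowMeasure

/-- The measure `x ^ s dx` on `(0, ∞)`. -/
noncomputable def powMeasure (s : ℝ) : Measure ℝ :=
  (volume.restrict (Ioi 0)).withDensity fun x => ENNReal.ofReal (x ^ s)

instance (s : ℝ) : SFinite (powMeasure s) := by unfold powMeasure; infer_instance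

theorem ae_pos_powMeasure (s : ℝ) : ∀ᵐ x ∂powMeasure s, 0 < x :=
  (withDensity_absolutelyContinuous _ _).ae_le (ae_restrict_mem measurableSet_Ioi)

variable {E : Type*} [NormedAddCommGroup E] [NormedSpace ℝ E]

theorem integral_powMeasure (s : ℝ) (f : ℝ → E) :
    ∫ x, f x ∂powMeasure s = ∫ x in Ioi (0 : ℝ), x ^ s • f x := by
  rw [powMeasure, integral_withDensity_eq_integral_toReal_smul (by fun_prop) (by simp)]
  refine setIntegral_congr_fun measurableSet_Ioi fun x hx => ?_
  rw [ENNReal.toReal_ofReal (Real.rpow_nonneg hx.le _)]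

theorem integrable_powMeasure_iff {s : ℝ} {f : ℝ → E} :
    Integrable f (powMeasure s) ↔ IntegrableOn (fun x => x ^ s • f x) (Ioi (0 : ℝ)) := by
  rw [powMeasure, integrable_withDensity_iff_integrable_smul' (by fun_prop) (by simp)]
  refine integrable_congr ?_
  filter_upwards [ae_restrict_mem measurableSet_Ioi] with x hx
  rw [ENNReal.toReal_ofReal (Real.rpow_nonneg hx.le _)]

theorem integral_comp_sq_powMeasure (ν : ℝ) (f : ℝ → E) :
    ∫ x, f (x ^ 2) ∂powMeasure (2 * ν + 1) = (1 / 2 : ℝ) • ∫ v, f v ∂powMeasure ν := by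
  rw [integral_powMeasure, integral_powMeasure,
    ← integral_comp_rpow_Ioi (fun v : ℝ => v ^ ν • f v) two_ne_zero, ← integral_smul]
  refine setIntegral_congr_fun measurableSet_Ioi fun x (hx : 0 < x) => ?_
  simp only [Real.rpow_two, smul_smul]
  have hpow : x ^ (2 * ν + 1) = x ^ ((2 : ℝ) - 1) * (x ^ 2) ^ ν := by
    rw [← Real.rpow_natCast, ← Real.rpow_mul hx.le, ← Real.rpow_add hx]
    push_cast
    ring_nf
  rw [hpow, abs_two]
  ring_nf

end PowMeasure

section Weber

open scoped Nat

theorem eq_of_eq_ofReal_of_re_pos {f g : ℂ → ℂ} (hf : DifferentiableOn ℂ f {z | 0 < z.re})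
    (hg : DifferentiableOn ℂ g {z | 0 < z.re}) (hfg : ∀ r : ℝ, 0 < r → f r = g r) {z : ℂ}
    (hz : 0 < z.re) : f z = g z := by
  have hopen : IsOpen {z : ℂ | 0 < z.re} := isOpen_lt continuous_const Complex.continuous_re
  have hconn : IsPreconnected {z : ℂ | 0 < z.re} := (convex_halfSpace_re_gt 0).isPreconnected
  have hmap : Tendsto (fun r : ℝ => (r : ℂ)) (nhdsWithin 1 {1}ᶜ) (nhdsWithin 1 {1}ᶜ) :=
    Complex.continuous_ofReal.continuousWithinAt.tendsto_nhdsWithin fun r hr => by simpa using hr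
  have hfreq : ∃ᶠ w in nhdsWithin (1 : ℂ) {1}ᶜ, f w = g w := by
    refine hmap.frequently (Eventually.frequently ?_)
    exact (eventually_nhdsWithin_of_eventually_nhds (eventually_gt_nhds one_pos)).mono hfg
  exact (hf.analyticOnNhd hopen).eqOn_of_preconnected_of_frequently_eq (hg.analyticOnNhd hopen)
    hconn (by simp) hfreq hz

variable {ν : ℝ} {ρ : ℂ}

theorem integrable_exp_neg_mul_powMeasure (hν : -1 < ν) (hρ : 0 < ρ.re) :
    Integrable (fun v : ℝ => Complex.exp (-ρ * v)) (powMeasure ν) := by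
  rw [integrable_powMeasure_iff, IntegrableOn, ← integrable_norm_iff (by fun_prop)]
  refine (integrableOn_rpow_mul_exp_neg_mul_rpow hν one_pos hρ).congr_fun (fun v (hv : 0 < v) => ?_)
    measurableSet_Ioi
  simp [Complex.norm_exp, abs_of_nonneg (Real.rpow_nonneg hv.le ν)]

theorem differentiableOn_integral_exp_neg_mul_powMeasure (hν : -1 < ν) :
    DifferentiableOn ℂ (fun ρ => ∫ v : ℝ, Complex.exp (-ρ * v) ∂powMeasure ν)
      {ρ | 0 < ρ.re} := by
  intro ρ (hρ : 0 < ρ.re)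
  have hset : Iio 0 ⊆ ProbabilityTheory.integrableExpSet id (powMeasure ν) := fun r hr => by
    have h := (integrable_exp_neg_mul_powMeasure (ρ := (-r : ℝ)) hν (by simpa using hr)).norm
    simpa [ProbabilityTheory.integrableExpSet, Complex.norm_exp] using h
  have hmgf := (ProbabilityTheory.analyticAt_complexMGF (z := -ρ)
    (mem_interior.2 ⟨Iio 0, hset, isOpen_Iio, by simpa using hρ⟩)).differentiableAt
  exact (hmgf.comp ρ differentiableAt_id.neg).differentiableWithinAt

theorem integral_exp_neg_mul_powMeasure (hν : -1 < ν) (hρ : 0 < ρ.re) :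
    ∫ v : ℝ, Complex.exp (-ρ * v) ∂powMeasure ν =
      (1 / ρ) ^ (ν + 1 : ℂ) * Complex.Gamma (ν + 1) := by
  refine eq_of_eq_ofReal_of_re_pos (differentiableOn_integral_exp_neg_mul_powMeasure hν)
    (g := fun ρ => (1 / ρ) ^ (ν + 1 : ℂ) * Complex.Gamma (ν + 1)) ?_ (fun r hr => ?_) hρ
  · intro z (hz : 0 < z.re)
    have hz0 : z ≠ 0 := by rintro rfl; simp at hz
    have hslit : 1 / z ∈ Complex.slitPlane :=
      Or.inl (by simpa using div_pos hz (Complex.normSq_pos.2 hz0))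
    exact ((((differentiableAt_const 1).div differentiableAt_id hz0).cpow_const hslit).mul_const
      _).differentiableWithinAt
  · have hre : 0 < (ν + 1 : ℂ).re := by simp; linarith
    rw [← Complex.integral_cpow_mul_exp_neg_mul_Ioi hre hr, integral_powMeasure]
    refine setIntegral_congr_fun measurableSet_Ioi fun v (hv : 0 < v) => ?_
    simp [Complex.ofReal_cpow hv.le]

theorem integral_pow_mul_exp_powMeasure (hν : -1 < ν) (hρ : 0 < ρ.re) (n : ℕ) :
    ∫ v : ℝ, (v : ℂ) ^ n * Complex.exp (-ρ * v) ∂powMeasure ν =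
      (1 / ρ) ^ (ν + 1 : ℂ) * ((1 / ρ) ^ n * Complex.Gamma (ν + 1 + n)) := by
  have hρ0 : ρ ≠ 0 := by rintro rfl; simp at hρ
  have hexp := integral_exp_neg_mul_powMeasure (ν := ν + n) (ρ := ρ)
    (by linarith [n.cast_nonneg (α := ℝ)]) hρ
  rw [Complex.ofReal_add, add_right_comm, Complex.ofReal_natCast,
    Complex.cpow_add _ _ (one_div_ne_zero hρ0), Complex.cpow_natCast, mul_assoc] at hexp
  rw [← hexp, integral_powMeasure, integral_powMeasure]
  refine setIntegral_congr_fun measurableSet_Ioi fun v (hv : 0 < v) => ?_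
  simp [Real.rpow_add hv, mul_assoc]

theorem integrable_pow_mul_exp_powMeasure (hν : -1 < ν) (hρ : 0 < ρ.re) (n : ℕ) :
    Integrable (fun v : ℝ => (v : ℂ) ^ n * Complex.exp (-ρ * v)) (powMeasure ν) := by
  have hre : 0 < (ν + 1 + n : ℂ).re := by simp; linarith [n.cast_nonneg (α := ℝ)]
  have hρ0 : ρ ≠ 0 := by rintro rfl; simp at hρ
  refine Integrable.of_integral_ne_zero ?_
  rw [integral_pow_mul_exp_powMeasure hν hρ]
  simp [Complex.Gamma_ne_zero_of_re_pos hre, hρ0]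

/-- The `(k, l)` term of the expansion of `exp (-ρv) * C_ν(Av) * C_ν(Bv)` in powers of `A` and
`B`. -/
noncomputable def weberTerm (ν A B ρ : ℂ) (p : ℕ × ℕ) (v : ℝ) : ℂ :=
  A ^ p.1 / p.1! * (B ^ p.2 / p.2!) /
    (Complex.Gamma (ν + 1 + p.1) * Complex.Gamma (ν + 1 + p.2)) *
      ((v : ℂ) ^ (p.1 + p.2) * Complex.exp (-ρ * v))

theorem hasSum_weberTerm (ν A B ρ : ℂ) (v : ℝ) :
    HasSum (weberTerm ν A B ρ · v)
      (Complex.exp (-ρ * v) * besselClifford ν (A * v) * besselClifford ν (B * v)) := by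
  rw [mul_assoc]
  refine ((hasSum_mul_prod (hasSum_besselClifford ν (A * v))
    (hasSum_besselClifford ν (B * v))).mul_left _).congr_fun fun p => ?_
  rw [weberTerm]
  ring

theorem hasSum_integral_weberTerm (hν : -1 < ν) (hρ : 0 < ρ.re) (A B : ℂ) :
    HasSum (fun p => ∫ v, weberTerm ν A B ρ p v ∂powMeasure ν)
      ((1 / ρ) ^ (ν + 1 : ℂ) *
        (Complex.exp ((A + B) / ρ) * besselClifford ν (A * B / ρ ^ 2))) := by
  have h := (hasSum_exp_add_mul_besselClifford_mul (ν := ν) (by simpa) (A / ρ) (B / ρ)).mul_left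
    ((1 / ρ) ^ (ν + 1 : ℂ))
  rw [← add_div, div_mul_div_comm, ← sq] at h
  refine h.congr_fun fun p => ?_
  simp only [weberTerm]
  rw [integral_const_mul, integral_pow_mul_exp_powMeasure hν hρ]
  push_cast
  ring_nf

theorem ofReal_norm_weberTerm (hν : -1 < ν) (A B : ℂ) (p : ℕ × ℕ) {v : ℝ} (hv : 0 < v) :
    (‖weberTerm ν A B ρ p v‖ : ℂ) = weberTerm ν ‖A‖ ‖B‖ ρ.re p v := by
  have hΓ (n : ℕ) : (‖Complex.Gamma (ν + 1 + n)‖ : ℂ) = Complex.Gamma (ν + 1 + n) := by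
    have hpos : 0 < Real.Gamma (ν + 1 + n) :=
      Real.Gamma_pos_of_pos (by linarith [n.cast_nonneg (α := ℝ)])
    have heq : Complex.Gamma (ν + 1 + n) = Real.Gamma (ν + 1 + n) := by
      rw [← Complex.Gamma_ofReal]
      push_cast
      rfl
    rw [heq, Complex.norm_of_nonneg hpos.le]
  simp [weberTerm, hΓ, Complex.norm_exp, abs_of_pos hv]

theorem integral_exp_mul_besselClifford_mul_besselClifford (hν : -1 < ν) (hρ : 0 < ρ.re)
    (A B : ℂ) :
    ∫ v : ℝ, Complex.exp (-ρ * v) * besselClifford ν (A * v) * besselClifford ν (B * v)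
        ∂powMeasure ν =
      (1 / ρ) ^ (ν + 1 : ℂ) *
        (Complex.exp ((A + B) / ρ) * besselClifford ν (A * B / ρ ^ 2)) := by
  have hint (p : ℕ × ℕ) : Integrable (weberTerm ν A B ρ p) (powMeasure ν) :=
    (integrable_pow_mul_exp_powMeasure hν hρ _).const_mul _
  have hnorm : Summable fun p => ∫ v, ‖weberTerm ν A B ρ p v‖ ∂powMeasure ν := by
    have h := (hasSum_integral_weberTerm (ρ := ρ.re) hν hρ ‖A‖ ‖B‖).summable
    refine Complex.summable_ofReal.1 (h.congr fun p => ?_)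
    rw [← integral_complex_ofReal]
    refine integral_congr_ae ?_
    filter_upwards [ae_pos_powMeasure ν] with v hv
    exact (ofReal_norm_weberTerm hν A B p hv).symm
  have hsum := hasSum_integral_of_summable_integral_norm hint hnorm
  simp only [fun v => (hasSum_weberTerm ν A B ρ v).tsum_eq] at hsum
  exact hsum.unique (hasSum_integral_weberTerm hν hρ A B)

theorem integral_exp_mul_besselClifford (hν : -1 < ν) (hρ : 0 < ρ.re) (A : ℂ) :
    ∫ v : ℝ, Complex.exp (-ρ * v) * besselClifford ν (A * v) ∂powMeasure ν =
      (1 / ρ) ^ (ν + 1 : ℂ) * Complex.exp (A / ρ) := by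
  have h := integral_exp_mul_besselClifford_mul_besselClifford hν hρ A 0
  have hΓ : besselClifford ν 0 ≠ 0 := by
    rw [besselClifford_zero]
    exact inv_ne_zero (Complex.Gamma_ne_zero_of_re_pos (by simp; linarith))
  simp only [zero_mul, mul_zero, zero_div, add_zero] at h
  rw [integral_mul_const, ← mul_assoc] at h
  exact mul_right_cancel₀ hΓ h

/- With `ζ = 2αβ / ρ`, the exponential in `norm_besselClifford_sq_le` is absorbed by completing
the square. -/
theorem norm_exp_mul_besselClifford_le (hν : -1 / 2 ≤ ν) (hρ : 0 < ρ.re) (α β : ℝ) :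
    ‖Complex.exp (-(α ^ 2 + β ^ 2) / ρ) * besselClifford ν (α ^ 2 * β ^ 2 / ρ ^ 2)‖ ≤
      (Real.Gamma (ν + 1))⁻¹ := by
  have hΓ : 0 < Real.Gamma (ν + 1) := Real.Gamma_pos_of_pos (by linarith)
  have hκ : 0 ≤ (ρ⁻¹).re := by
    rw [Complex.inv_re]
    exact div_nonneg hρ.le (Complex.normSq_nonneg _)
  have hC := norm_besselClifford_sq_le hν ((2 * α * β : ℝ) * ρ⁻¹)
  have hζ : ((2 * α * β : ℝ) * ρ⁻¹) ^ 2 / 4 = (α ^ 2 * β ^ 2 / ρ ^ 2 : ℂ) := by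
    push_cast
    ring
  rw [hζ, Complex.re_ofReal_mul, abs_mul, abs_of_nonneg hκ] at hC
  have hexp : ‖Complex.exp (-(α ^ 2 + β ^ 2) / ρ)‖ = Real.exp (-(α ^ 2 + β ^ 2) * (ρ⁻¹).re) := by
    rw [Complex.norm_exp, div_eq_mul_inv, ← Complex.re_ofReal_mul]
    push_cast
    rfl
  calc ‖Complex.exp (-(α ^ 2 + β ^ 2) / ρ) * besselClifford ν (α ^ 2 * β ^ 2 / ρ ^ 2)‖
      ≤ Real.exp (-(α ^ 2 + β ^ 2) * (ρ⁻¹).re) *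
          ((Real.Gamma (ν + 1))⁻¹ * Real.exp (|2 * α * β| * (ρ⁻¹).re)) := by
        rw [norm_mul, hexp]
        gcongr
    _ = (Real.Gamma (ν + 1))⁻¹ * Real.exp (-(|α| - |β|) ^ 2 * (ρ⁻¹).re) := by
        rw [mul_left_comm, ← Real.exp_add, ← add_mul, abs_mul, abs_mul, abs_two, ← sq_abs α,
          ← sq_abs β]
        ring_nf
    _ ≤ (Real.Gamma (ν + 1))⁻¹ := by
        refine mul_le_of_le_one_right (by positivity) (Real.exp_le_one_iff.2 ?_)
        exact mul_nonpos_of_nonpos_of_nonneg (neg_nonpos.2 (sq_nonneg _)) hκ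

theorem norm_besselClifford_neg_sq_le (hν : -1 / 2 ≤ ν) (x : ℝ) :
    ‖besselClifford ν (-x ^ 2)‖ ≤ (Real.Gamma (ν + 1))⁻¹ := by
  have h := norm_besselClifford_sq_le hν (2 * x * Complex.I)
  rw [show (2 * x * Complex.I) ^ 2 / 4 = (-x ^ 2 : ℂ) by rw [mul_pow, Complex.I_sq]; ring] at h
  simpa using h

end Weber

section TTStar

variable {X Y Z : Type*}

section KernelOp

variable {K : X → Y → ℂ} {f : Y → ℂ} {A : ℝ}

theorem norm_kernel_mul_le (hK : ∀ x y, ‖K x y‖ ≤ A) (x : X) (y : Y) :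
    ‖K x y * f y‖ ≤ A * ‖f y‖ :=
  (norm_mul_le _ _).trans (by gcongr; exact hK x y)

variable [MeasurableSpace Y] {m : Measure Y}

/-- The integral operator with kernel `K`. -/
noncomputable def kernelOp (m : Measure Y) (K : X → Y → ℂ) (f : Y → ℂ) (x : X) : ℂ :=
  ∫ y, K x y * f y ∂m

theorem norm_kernelOp_le (hK : ∀ x y, ‖K x y‖ ≤ A) (hf : Integrable f m) (x : X) :
    ‖kernelOp m K f x‖ ≤ A * ∫ y, ‖f y‖ ∂m := by
  rw [← integral_const_mul]
  exact norm_integral_le_of_norm_le (hf.norm.const_mul A)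
    (Eventually.of_forall (norm_kernel_mul_le hK x))

variable [MeasurableSpace X]

theorem measurable_uncurry_kernel_mul (hK : Measurable (Function.uncurry K)) (hf : Measurable f) :
    Measurable (Function.uncurry fun x y => K x y * f y) :=
  hK.mul (hf.comp measurable_snd)

theorem measurable_kernelOp [SFinite m] (hK : Measurable (Function.uncurry K))
    (hf : Measurable f) : Measurable (kernelOp m K f) :=
  (measurable_uncurry_kernel_mul hK hf).stronglyMeasurable.integral_prod_right.measurable

end KernelOp

variable [MeasurableSpace X] {μ : Measure X}

/-- The kernel of `L* K`, where `K` and `L` stand for the integral operators with these kernels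
and the adjoint is taken in `L²(μ)`. -/
noncomputable def gramKernel (μ : Measure X) (K : X → Y → ℂ) (L : X → Z → ℂ) (y : Y) (z : Z) : ℂ :=
  ∫ x, K x y * conj (L x z) ∂μ

theorem norm_gramKernel_comm (K : X → Y → ℂ) (L : X → Z → ℂ) (y : Y) (z : Z) :
    ‖gramKernel μ K L y z‖ = ‖gramKernel μ L K z y‖ := by
  rw [gramKernel, ← RCLike.norm_conj, ← integral_conj, gramKernel]
  simp only [map_mul, Complex.conj_conj, mul_comm]

theorem norm_integral_mul_conj_le_sqrt {f g : X → ℂ} (hf : MemLp f 2 μ) (hg : MemLp g 2 μ) :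
    ‖∫ x, f x * conj (g x) ∂μ‖ ≤ √(∫ x, ‖f x‖ ^ 2 ∂μ) * √(∫ x, ‖g x‖ ^ 2 ∂μ) := by
  have hhölder := integral_mul_norm_le_Lp_mul_Lq (μ := μ) Real.HolderConjugate.two_two
    (by simpa using hf) (by simpa using hg)
  simp only [Real.rpow_two, ← Real.sqrt_eq_rpow] at hhölder
  refine (norm_integral_le_integral_norm _).trans ?_
  simpa only [norm_mul, RCLike.norm_conj] using hhölder

variable [MeasurableSpace Y] [MeasurableSpace Z] {m : Measure Y} {n : Measure Z}

section Fubini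

variable {Φ : X → Y → ℂ} {Ψ : X → Z → ℂ} {F : Y → ℝ} {G : Z → ℝ}

theorem integrable_mul_conj_of_dominated [IsFiniteMeasure μ] [SFinite m] [SFinite n]
    (hΦ : Measurable (Function.uncurry Φ)) (hΨ : Measurable (Function.uncurry Ψ))
    (hF : Integrable F m) (hG : Integrable G n) (hΦF : ∀ x y, ‖Φ x y‖ ≤ F y)
    (hΨG : ∀ x z, ‖Ψ x z‖ ≤ G z) :
    Integrable (fun p : X × Y × Z => Φ p.1 p.2.1 * conj (Ψ p.1 p.2.2)) (μ.prod (m.prod n)) := by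
  have hΦ' : Measurable fun p : X × Y × Z => Φ p.1 p.2.1 :=
    hΦ.comp (measurable_fst.prodMk measurable_snd.fst)
  have hΨ' : Measurable fun p : X × Y × Z => Ψ p.1 p.2.2 :=
    hΨ.comp (measurable_fst.prodMk measurable_snd.snd)
  have hconj := Complex.continuous_conj.measurable.comp hΨ'
  refine ((hF.mul_prod hG).comp_snd μ).mono' (hΦ'.mul hconj).aestronglyMeasurable
    (Eventually.of_forall fun p => ?_)
  have := (norm_nonneg _).trans (hΦF p.1 p.2.1)
  rw [norm_mul, RCLike.norm_conj]
  exact mul_le_mul (hΦF _ _) (hΨG _ _) (norm_nonneg _) this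

theorem integral_mul_conj_integral [IsFiniteMeasure μ] [SFinite m] [SFinite n]
    (hΦ : Measurable (Function.uncurry Φ)) (hΨ : Measurable (Function.uncurry Ψ))
    (hF : Integrable F m) (hG : Integrable G n) (hΦF : ∀ x y, ‖Φ x y‖ ≤ F y)
    (hΨG : ∀ x z, ‖Ψ x z‖ ≤ G z) :
    ∫ x, (∫ y, Φ x y ∂m) * conj (∫ z, Ψ x z ∂n) ∂μ =
      ∫ p : Y × Z, ∫ x, Φ x p.1 * conj (Ψ x p.2) ∂μ ∂(m.prod n) := by
  rw [← integral_integral_swap (integrable_mul_conj_of_dominated hΦ hΨ hF hG hΦF hΨG)]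
  refine integral_congr_ae (Eventually.of_forall fun x => ?_)
  dsimp only
  rw [← integral_conj, ← integral_prod_mul]

end Fubini

theorem measurable_gramKernel [SFinite μ] {K : X → Y → ℂ} {L : X → Z → ℂ}
    (hK : Measurable (Function.uncurry K)) (hL : Measurable (Function.uncurry L)) :
    Measurable (Function.uncurry (gramKernel μ K L)) := by
  have hK' : Measurable fun p : (Y × Z) × X => K p.2 p.1.1 :=
    hK.comp (measurable_snd.prodMk measurable_fst.fst)
  have hL' : Measurable fun p : (Y × Z) × X => L p.2 p.1.2 :=
    hL.comp (measurable_snd.prodMk measurable_fst.snd)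
  have hconj := Complex.continuous_conj.measurable.comp hL'
  exact (hK'.mul hconj).stronglyMeasurable.integral_prod_right.measurable

theorem integrable_schur [SFinite m] {k : Y → Y → ℝ} {h : Y → ℝ} {C : ℝ}
    (hk : Measurable (Function.uncurry k)) (hk0 : ∀ y y', 0 ≤ k y y')
    (hki : ∀ y, Integrable (k y) m) (hrow : ∀ y, ∫ y', k y y' ∂m ≤ C) (hh : Integrable h m) :
    Integrable (fun p : Y × Y => k p.1 p.2 * h p.1) (m.prod m) := by
  have hmeas : AEStronglyMeasurable (fun p : Y × Y => k p.1 p.2 * h p.1) (m.prod m) :=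
    hk.aestronglyMeasurable.mul hh.aestronglyMeasurable.comp_fst
  refine (integrable_prod_iff hmeas).2 ⟨Eventually.of_forall fun y => (hki y).mul_const (h y), ?_⟩
  refine (hh.norm.const_mul C).mono' hmeas.norm.integral_prod_right'
    (Eventually.of_forall fun y => ?_)
  simp only [norm_mul, Real.norm_of_nonneg (hk0 _ _)]
  rw [integral_mul_const, norm_mul, norm_norm,
    Real.norm_of_nonneg (integral_nonneg fun y' => hk0 y y')]
  gcongr
  exact hrow y

theorem norm_integral_mul_conj_le_schur [SFinite m] {G : Y → Y → ℂ} {f : Y → ℂ} {C : ℝ}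
    (hG : Measurable (Function.uncurry G)) (hsymm : ∀ y y', ‖G y y'‖ = ‖G y' y‖)
    (hGi : ∀ y, Integrable (G y) m) (hrow : ∀ y, ∫ y', ‖G y y'‖ ∂m ≤ C)
    (hf : Integrable (fun y => ‖f y‖ ^ 2) m) :
    ‖∫ p : Y × Y, G p.1 p.2 * (f p.1 * conj (f p.2)) ∂(m.prod m)‖ ≤ C * ∫ y, ‖f y‖ ^ 2 ∂m := by
  have hint := integrable_schur hG.norm (fun _ _ => norm_nonneg _) (fun y => (hGi y).norm) hrow hf
  have hle : ∫ p : Y × Y, ‖G p.1 p.2‖ * ‖f p.1‖ ^ 2 ∂(m.prod m) ≤ C * ∫ y, ‖f y‖ ^ 2 ∂m := by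
    rw [integral_prod _ hint, ← integral_const_mul]
    refine integral_mono hint.integral_prod_left (hf.const_mul C) fun y => ?_
    dsimp only
    rw [integral_mul_const]
    gcongr
    exact hrow y
  have hswap := integral_prod_swap (μ := m) (ν := m) fun p : Y × Y => ‖G p.1 p.2‖ * ‖f p.1‖ ^ 2
  simp only [Prod.fst_swap, Prod.snd_swap] at hswap
  calc ‖∫ p : Y × Y, G p.1 p.2 * (f p.1 * conj (f p.2)) ∂(m.prod m)‖
      ≤ ∫ p : Y × Y, 1 / 2 * (‖G p.1 p.2‖ * ‖f p.1‖ ^ 2 + ‖G p.2 p.1‖ * ‖f p.2‖ ^ 2)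
          ∂(m.prod m) := by
        refine norm_integral_le_of_norm_le ((hint.add hint.swap).const_mul _)
          (Eventually.of_forall fun p => ?_)
        rw [norm_mul, norm_mul, RCLike.norm_conj, hsymm p.2 p.1, ← mul_add]
        nlinarith [mul_le_mul_of_nonneg_left (two_mul_le_add_sq ‖f p.1‖ ‖f p.2‖)
          (norm_nonneg (G p.1 p.2))]
    _ = ∫ p : Y × Y, ‖G p.1 p.2‖ * ‖f p.1‖ ^ 2 ∂(m.prod m) := by
        have hadd := integral_add hint hint.swap
        simp only [Function.comp_apply, Prod.fst_swap, Prod.snd_swap] at hadd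
        rw [integral_const_mul, hadd, hswap]
        ring
    _ ≤ _ := hle

variable {K : X → Y → ℂ} {L : X → Z → ℂ} {f : Y → ℂ} {g : Z → ℂ} {A B : ℝ}

theorem integral_kernelOp_mul_conj [IsFiniteMeasure μ] [SFinite m] [SFinite n]
    (hK : Measurable (Function.uncurry K)) (hL : Measurable (Function.uncurry L))
    (hKA : ∀ x y, ‖K x y‖ ≤ A) (hLB : ∀ x z, ‖L x z‖ ≤ B) (hf : Measurable f) (hg : Measurable g)
    (hfi : Integrable f m) (hgi : Integrable g n) :
    ∫ x, kernelOp m K f x * conj (kernelOp n L g x) ∂μ =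
      ∫ p : Y × Z, gramKernel μ K L p.1 p.2 * (f p.1 * conj (g p.2)) ∂(m.prod n) := by
  refine (integral_mul_conj_integral (measurable_uncurry_kernel_mul hK hf)
    (measurable_uncurry_kernel_mul hL hg) (hfi.norm.const_mul A) (hgi.norm.const_mul B)
    (norm_kernel_mul_le hKA) (norm_kernel_mul_le hLB)).trans ?_
  refine integral_congr_ae (Eventually.of_forall fun p => ?_)
  simp only [gramKernel, ← integral_mul_const, map_mul]
  refine integral_congr_ae (Eventually.of_forall fun x => ?_)
  ring

theorem integral_norm_kernelOp_sq_le [IsFiniteMeasure μ] [SFinite m] {C : ℝ}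
    (hK : Measurable (Function.uncurry K)) (hKA : ∀ x y, ‖K x y‖ ≤ A)
    (hrow : ∀ y, ∫ y', ‖gramKernel μ K K y y'‖ ∂m ≤ C)
    (hgram : ∀ y, Integrable (gramKernel μ K K y) m) (hf : Measurable f)
    (hfi : Integrable f m) (hf2 : Integrable (fun y => ‖f y‖ ^ 2) m) :
    ∫ x, ‖kernelOp m K f x‖ ^ 2 ∂μ ≤ C * ∫ y, ‖f y‖ ^ 2 ∂m := by
  have hsq : ((∫ x, ‖kernelOp m K f x‖ ^ 2 ∂μ : ℝ) : ℂ) =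
      ∫ x, kernelOp m K f x * conj (kernelOp m K f x) ∂μ := by
    simp only [Complex.mul_conj', ← integral_complex_ofReal, Complex.ofReal_pow]
  have hschur := norm_integral_mul_conj_le_schur (measurable_gramKernel hK hK)
    (norm_gramKernel_comm K K) hgram hrow hf2
  rw [← integral_kernelOp_mul_conj hK hK hKA hKA hf hf hfi hfi, ← hsq,
    Complex.norm_of_nonneg (integral_nonneg fun x => sq_nonneg _)] at hschur
  exact hschur

end TTStar

section FresnelKernel

variable {ν τ σ δ : ℝ}

/-- The finite measure `exp (-δ x²) x ^ s dx` on `(0, ∞)`. -/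
noncomputable def gaussPowMeasure (δ s : ℝ) : Measure ℝ :=
  (powMeasure s).withDensity fun x => ENNReal.ofReal (Real.exp (-δ * x ^ 2))

theorem integrable_exp_neg_mul_sq_powMeasure {s : ℝ} (hs : -1 < s) (hδ : 0 < δ) :
    Integrable (fun x : ℝ => Real.exp (-δ * x ^ 2)) (powMeasure s) := by
  rw [integrable_powMeasure_iff]
  refine (integrableOn_rpow_mul_exp_neg_mul_rpow hs two_pos hδ).congr_fun (fun x _ => ?_)
    measurableSet_Ioi
  simp

theorem isFiniteMeasure_gaussPowMeasure {s : ℝ} (hs : -1 < s) (hδ : 0 < δ) :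
    IsFiniteMeasure (gaussPowMeasure δ s) :=
  isFiniteMeasure_withDensity_ofReal (integrable_exp_neg_mul_sq_powMeasure hs hδ).2

theorem integral_gaussPowMeasure {E : Type*} [NormedAddCommGroup E] [NormedSpace ℝ E] (δ s : ℝ)
    (f : ℝ → E) :
    ∫ x, f x ∂gaussPowMeasure δ s = ∫ x, Real.exp (-δ * x ^ 2) • f x ∂powMeasure s := by
  rw [gaussPowMeasure, integral_withDensity_eq_integral_toReal_smul (by fun_prop) (by simp)]
  simp only [ENNReal.toReal_ofReal (Real.exp_nonneg _)]

/-- The kernel `S_a(x, y, -t)` for `a = 2ν + 1`, in terms of `τ = 1 / (4t)`. The principal branch of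
`(iτ) ^ (ν + 1)` produces the phase `exp (±i(a + 1)π / 4)`. -/
noncomputable def fresnelKernel (ν τ x y : ℝ) : ℂ :=
  2 * (Complex.I * τ) ^ (ν + 1 : ℂ) *
    (Complex.exp (-Complex.I * τ * x ^ 2) * Complex.exp (-Complex.I * τ * y ^ 2)) *
      besselClifford ν (-(τ * x * y) ^ 2)

theorem rpow_neg_mul_besselJ (ν : ℝ) {z : ℝ} (hz : 0 < z) :
    ((z ^ (-ν) : ℝ) : ℂ) * besselJ ν z =
      ((2 ^ (-ν) : ℝ) : ℂ) * besselClifford ν (-(z / 2) ^ 2) := by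
  rw [besselJ_eq_cpow_mul_besselClifford ν hz, ← mul_assoc, ← Complex.ofReal_cpow (by positivity),
    ← Complex.ofReal_mul, Real.div_rpow hz.le two_pos.le, Real.rpow_neg hz.le,
    Real.rpow_neg two_pos.le, inv_mul_eq_div, div_right_comm,
    div_self (Real.rpow_pos_of_pos hz ν).ne', one_div]

theorem mul_ofReal_cpow {c : ℂ} (hc : c ≠ 0) {r : ℝ} (hr : 0 < r) (s : ℝ) :
    (c * r) ^ (s : ℂ) = Complex.exp (Complex.log c * s) * ((r ^ s : ℝ) : ℂ) := by
  have hr' : (r : ℂ) ≠ 0 := Complex.ofReal_ne_zero.2 hr.ne'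
  rw [Complex.cpow_def_of_ne_zero (mul_ne_zero hc hr'), mul_comm c, Complex.log_ofReal_mul hr hc,
    Complex.ofReal_cpow hr.le, Complex.cpow_def_of_ne_zero hr', ← Complex.exp_add,
    Complex.ofReal_log hr.le]
  ring_nf

theorem rpow_mul_rpow_mul_besselJ {t x y : ℝ} (ν : ℝ) (ht : 0 < t) (hx : 0 < x) (hy : 0 < y) :
    (((2 * t) ^ (-(2 * ν + 1 + 1) / 2) : ℝ) : ℂ) *
        (((x * y / (2 * t)) ^ ((1 - (2 * ν + 1)) / 2) : ℝ) : ℂ) *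
        besselJ (((2 * ν + 1 - 1) / 2 : ℝ) : ℂ) (x * y / (2 * t)) =
      2 * (((4 * t)⁻¹ ^ (ν + 1) : ℝ) : ℂ) * besselClifford ν (-((4 * t)⁻¹ * x * y : ℝ) ^ 2) := by
  have hpow : (2 * t) ^ (-(2 * ν + 1 + 1) / 2) * 2 ^ (-ν) = 2 * (4 * t)⁻¹ ^ (ν + 1) := by
    rw [Real.inv_rpow (by positivity), ← Real.rpow_neg (by positivity),
      show 4 * t = 2 * t * 2 by ring, Real.mul_rpow (z := -(ν + 1)) (by positivity) two_pos.le,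
      show -(2 * ν + 1 + 1) / 2 = -(ν + 1) by ring, show -ν = 1 + -(ν + 1) by ring,
      Real.rpow_add two_pos, Real.rpow_one]
    ring
  rw [show (1 - (2 * ν + 1)) / 2 = -ν by ring, show (2 * ν + 1 - 1) / 2 = ν by ring, mul_assoc,
    rpow_neg_mul_besselJ ν (by positivity), ← mul_assoc, ← Complex.ofReal_mul, hpow]
  push_cast
  ring_nf

theorem Skernel_neg_eq_fresnelKernel {t x y : ℝ} (ht : t ≠ 0) (hx : 0 < x) (hy : 0 < y) :
    Skernel (2 * ν + 1) x y (-t) = fresnelKernel ν (4 * t)⁻¹ x y := by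
  have hν : (ν + 1 : ℂ) = (ν + 1 : ℝ) := by push_cast; rfl
  have hexp (c : ℂ) : Complex.exp (c * (x ^ 2 + y ^ 2)) =
      Complex.exp (c * x ^ 2) * Complex.exp (c * y ^ 2) := by rw [← Complex.exp_add, mul_add]
  rw [fresnelKernel, ← hexp, hν, Skernel]
  rcases ht.lt_or_gt with ht | ht
  · have hτ : 0 < (4 * -t)⁻¹ := inv_pos.2 (by linarith)
    rw [if_pos (neg_pos.2 ht), abs_of_pos (neg_pos.2 ht), mul_assoc (Complex.exp _),
      mul_assoc (Complex.exp _), rpow_mul_rpow_mul_besselJ ν (neg_pos.2 ht) hx hy,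
      show Complex.I * ((4 * t)⁻¹ : ℝ) = -Complex.I * ((4 * -t)⁻¹ : ℝ) by
        rw [mul_neg, inv_neg, Complex.ofReal_neg, neg_mul_neg],
      mul_ofReal_cpow (neg_ne_zero.2 Complex.I_ne_zero) hτ, Complex.log_neg_I]
    rw [mul_neg, inv_neg]
    push_cast
    ring_nf
  · have hτ : 0 < (4 * t)⁻¹ := inv_pos.2 (by linarith)
    rw [if_neg (by linarith), abs_neg, abs_of_pos ht, mul_assoc (Complex.exp _),
      mul_assoc (Complex.exp _), rpow_mul_rpow_mul_besselJ ν ht hx hy,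
      mul_ofReal_cpow Complex.I_ne_zero hτ, Complex.log_I]
    push_cast
    ring_nf

theorem norm_I_mul_cpow (ν τ : ℝ) : ‖(Complex.I * τ) ^ (ν + 1 : ℂ)‖ = |τ| ^ (ν + 1) := by
  rw [← Complex.ofReal_one, ← Complex.ofReal_add, Complex.norm_cpow_real, norm_mul,
    Complex.norm_I, one_mul, Complex.norm_real, Real.norm_eq_abs]

theorem norm_exp_neg_I_mul_mul_sq (τ x : ℝ) : ‖Complex.exp (-Complex.I * τ * x ^ 2)‖ = 1 := by
  rw [show -Complex.I * τ * x ^ 2 = (-(τ * x ^ 2) : ℝ) * Complex.I by push_cast; ring,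
    Complex.norm_exp_ofReal_mul_I]

theorem norm_fresnelKernel_le (hν : -1 / 2 ≤ ν) (τ x y : ℝ) :
    ‖fresnelKernel ν τ x y‖ ≤ 2 * |τ| ^ (ν + 1) * (Real.Gamma (ν + 1))⁻¹ := by
  have hC := norm_besselClifford_neg_sq_le hν (τ * x * y)
  push_cast at hC
  simp only [fresnelKernel, norm_mul _ _, norm_I_mul_cpow, norm_exp_neg_I_mul_mul_sq, mul_one,
    RCLike.norm_ofNat]
  gcongr

theorem measurable_fresnelKernel (ν : ℝ) {X : Type*} [MeasurableSpace X] {τ x y : X → ℝ}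
    (hτ : Measurable τ) (hx : Measurable x) (hy : Measurable y) :
    Measurable fun p => fresnelKernel ν (τ p) (x p) (y p) := by
  have hpow : Measurable fun p => (Complex.I * τ p) ^ (ν + 1 : ℂ) :=
    Measurable.pow_const (by fun_prop) _
  have hexp : Measurable fun p => Complex.exp (-Complex.I * τ p * x p ^ 2) *
      Complex.exp (-Complex.I * τ p * y p ^ 2) := by fun_prop
  have hC : Measurable fun p => besselClifford ν (-(τ p * x p * y p) ^ 2) :=
    (continuous_besselClifford ν).measurable.comp (by fun_prop)
  exact ((hpow.const_mul 2).mul hexp).mul hC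

theorem measurable_uncurry_fresnelKernel (ν τ : ℝ) :
    Measurable (Function.uncurry (fresnelKernel ν τ)) :=
  measurable_fresnelKernel ν measurable_const measurable_fst measurable_snd

theorem exp_smul_fresnelKernel_mul_conj (ν δ τ σ x y y' : ℝ) :
    Real.exp (-δ * x ^ 2) • (fresnelKernel ν τ x y * conj (fresnelKernel ν σ x y')) =
      4 * ((Complex.I * τ) ^ (ν + 1 : ℂ) * conj ((Complex.I * σ) ^ (ν + 1 : ℂ))) *
        (Complex.exp (-Complex.I * τ * y ^ 2) * conj (Complex.exp (-Complex.I * σ * y' ^ 2))) *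
        (Complex.exp (-(δ + (τ - σ) * Complex.I) * (x ^ 2 : ℝ)) *
          besselClifford ν (-(τ * y) ^ 2 * (x ^ 2 : ℝ)) *
          besselClifford ν (-(σ * y') ^ 2 * (x ^ 2 : ℝ))) := by
  have hexp : Complex.exp (-(δ + (τ - σ) * Complex.I) * (x ^ 2 : ℝ)) =
      Complex.exp (-δ * x ^ 2 : ℝ) * (Complex.exp (-Complex.I * τ * x ^ 2) *
        conj (Complex.exp (-Complex.I * σ * x ^ 2))) := by
    rw [← Complex.exp_conj, ← Complex.exp_add, ← Complex.exp_add]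
    congr 1
    simp only [map_mul, map_neg, map_pow, Complex.conj_I, Complex.conj_ofReal]
    push_cast
    ring
  rw [hexp, fresnelKernel, fresnelKernel, Complex.real_smul, Complex.ofReal_exp]
  simp only [map_mul, map_ofNat, conj_besselClifford, map_neg, map_pow, Complex.conj_ofReal]
  push_cast
  ring_nf

theorem gramKernel_fresnelKernel (hν : -1 < ν) (hδ : 0 < δ) (τ σ y y' : ℝ) {ρ : ℂ}
    (hρ : δ + (τ - σ) * Complex.I = ρ) :
    gramKernel (gaussPowMeasure δ (2 * ν + 1)) (fresnelKernel ν τ) (fresnelKernel ν σ) y y' =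
      2 * ((Complex.I * τ) ^ (ν + 1 : ℂ) * conj ((Complex.I * σ) ^ (ν + 1 : ℂ))) *
        (Complex.exp (-Complex.I * τ * y ^ 2) * conj (Complex.exp (-Complex.I * σ * y' ^ 2))) *
        ((1 / ρ) ^ (ν + 1 : ℂ) * (Complex.exp (-((τ * y) ^ 2 + (σ * y') ^ 2) / ρ) *
          besselClifford ν ((τ * y) ^ 2 * (σ * y') ^ 2 / ρ ^ 2))) := by
  have hweber := integral_exp_mul_besselClifford_mul_besselClifford hν
    (ρ := ρ) (by simpa [← hρ]) (-(τ * y) ^ 2) (-(σ * y') ^ 2)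
  rw [neg_mul_neg, ← neg_add] at hweber
  have hsub := integral_comp_sq_powMeasure ν fun v : ℝ => Complex.exp (-ρ * v) *
    besselClifford ν (-(τ * y) ^ 2 * v) * besselClifford ν (-(σ * y') ^ 2 * v)
  rw [hweber, Complex.real_smul] at hsub
  simp only [gramKernel, integral_gaussPowMeasure, exp_smul_fresnelKernel_mul_conj, hρ]
  rw [integral_const_mul, hsub]
  push_cast
  ring

theorem norm_gramKernel_fresnelKernel (hν : -1 < ν) (hδ : 0 < δ) (τ σ y y' : ℝ) {ρ : ℂ}
    (hρ : δ + (τ - σ) * Complex.I = ρ) :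
    ‖gramKernel (gaussPowMeasure δ (2 * ν + 1)) (fresnelKernel ν τ) (fresnelKernel ν σ) y y'‖ =
      2 * (|τ| * |σ| / ‖ρ‖) ^ (ν + 1) *
        ‖Complex.exp (-((τ * y) ^ 2 + (σ * y') ^ 2) / ρ) *
          besselClifford ν ((τ * y) ^ 2 * (σ * y') ^ 2 / ρ ^ 2)‖ := by
  have hcpow : ‖(1 / ρ) ^ (ν + 1 : ℂ)‖ = ‖ρ‖⁻¹ ^ (ν + 1) := by
    rw [← Complex.ofReal_one, ← Complex.ofReal_add, Complex.norm_cpow_real, Complex.ofReal_one,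
      one_div, norm_inv]
  rw [gramKernel_fresnelKernel hν hδ τ σ y y' hρ, norm_mul, norm_mul, norm_mul, norm_mul,
    norm_mul (Complex.exp _), norm_mul (_ ^ _), RCLike.norm_conj, RCLike.norm_conj,
    norm_I_mul_cpow, norm_I_mul_cpow, norm_exp_neg_I_mul_mul_sq, norm_exp_neg_I_mul_mul_sq, hcpow,
    RCLike.norm_ofNat, div_eq_mul_inv (|τ| * |σ|), Real.mul_rpow (by positivity) (by positivity),
    Real.mul_rpow (by positivity) (by positivity)]
  ring

theorem norm_gramKernel_fresnelKernel_le (hν : -1 / 2 ≤ ν) (hδ : 0 < δ) (hτσ : τ ≠ σ)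
    (y y' : ℝ) :
    ‖gramKernel (gaussPowMeasure δ (2 * ν + 1)) (fresnelKernel ν τ) (fresnelKernel ν σ) y y'‖ ≤
      2 * (|τ| * |σ| / |τ - σ|) ^ (ν + 1) * (Real.Gamma (ν + 1))⁻¹ := by
  have hν' : -1 < ν := by linarith
  have hre : 0 < (δ + (τ - σ) * Complex.I : ℂ).re := by simpa
  have him : |τ - σ| ≤ ‖(δ + (τ - σ) * Complex.I : ℂ)‖ := by
    simpa using Complex.abs_im_le_norm (δ + (τ - σ) * Complex.I)
  have hexp := norm_exp_mul_besselClifford_le hν hre (τ * y) (σ * y')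
  push_cast at hexp
  rw [norm_gramKernel_fresnelKernel hν' hδ τ σ y y' rfl]
  gcongr
  linarith

theorem ofReal_norm_gramKernel_fresnelKernel_self (hν : -1 < ν) (hδ : 0 < δ) (τ y y' : ℝ) :
    (‖gramKernel (gaussPowMeasure δ (2 * ν + 1)) (fresnelKernel ν τ) (fresnelKernel ν τ)
        y y'‖ : ℂ) =
      2 * ((τ ^ 2 / δ) ^ (ν + 1) : ℝ) * Complex.exp (-(τ * y) ^ 2 / δ) *
        (Complex.exp (-(τ ^ 2 / δ : ℝ) * (y' ^ 2 : ℝ)) *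
          besselClifford ν (((τ ^ 2 * y) ^ 2 / δ ^ 2 : ℝ) * (y' ^ 2 : ℝ))) := by
  have hC := ofReal_norm_besselClifford (x := (τ ^ 2 * y) ^ 2 / δ ^ 2 * y' ^ 2) hν (by positivity)
  have hexp : Complex.exp (-((τ * y) ^ 2 + (τ * y') ^ 2) / δ) =
      Real.exp (-(τ * y) ^ 2 / δ) * Real.exp (-(τ ^ 2 / δ) * y' ^ 2) := by
    push_cast [← Complex.exp_add]
    ring_nf
  rw [norm_gramKernel_fresnelKernel hν hδ τ τ y y' (ρ := δ) (by ring), hexp,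
    Complex.norm_real, Real.norm_of_nonneg hδ.le, ← sq, sq_abs,
    show ((τ * y) ^ 2 * (τ * y') ^ 2 / δ ^ 2 : ℂ) = ((τ ^ 2 * y) ^ 2 / δ ^ 2 * y' ^ 2 : ℝ) by
      push_cast; ring, norm_mul, norm_mul, Complex.norm_real, Complex.norm_real,
    Real.norm_of_nonneg (Real.exp_nonneg _), Real.norm_of_nonneg (Real.exp_nonneg _)]
  push_cast at hC ⊢
  rw [hC]
  ring

theorem integral_norm_gramKernel_fresnelKernel_self (hν : -1 < ν) (hδ : 0 < δ) (hτ : τ ≠ 0)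
    (y : ℝ) :
    ∫ y', ‖gramKernel (gaussPowMeasure δ (2 * ν + 1)) (fresnelKernel ν τ) (fresnelKernel ν τ) y y'‖
      ∂powMeasure (2 * ν + 1) = 1 := by
  have hδ' : (δ : ℂ) ≠ 0 := Complex.ofReal_ne_zero.2 hδ.ne'
  have hpos : 0 < τ ^ 2 / δ := by positivity
  have hweber := integral_exp_mul_besselClifford (ρ := (τ ^ 2 / δ : ℝ)) hν
    (by rwa [Complex.ofReal_re]) ((τ ^ 2 * y) ^ 2 / δ ^ 2 : ℝ)
  have hsub := integral_comp_sq_powMeasure ν fun v : ℝ =>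
    Complex.exp (-(τ ^ 2 / δ : ℝ) * v) * besselClifford ν (((τ ^ 2 * y) ^ 2 / δ ^ 2 : ℝ) * v)
  rw [hweber, Complex.real_smul] at hsub
  have hpow : ((τ ^ 2 / δ) ^ (ν + 1) : ℝ) * (1 / (τ ^ 2 / δ : ℝ) : ℂ) ^ (ν + 1 : ℂ) = 1 := by
    rw [← Complex.ofReal_one, ← Complex.ofReal_div, ← Complex.ofReal_add,
      ← Complex.ofReal_cpow (by positivity), ← Complex.ofReal_mul,
      ← Real.mul_rpow hpos.le (by positivity), mul_one_div_cancel hpos.ne', Real.one_rpow]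
  have hexp : Complex.exp (-(τ * y) ^ 2 / δ) *
      Complex.exp (((τ ^ 2 * y) ^ 2 / δ ^ 2 : ℝ) / (τ ^ 2 / δ : ℝ)) = 1 := by
    rw [← Complex.exp_add, ← Complex.exp_zero]
    congr 1
    push_cast
    field_simp
    ring
  have hone := congrArg₂ (· * ·) hpow hexp
  apply Complex.ofReal_injective
  simp only [← integral_complex_ofReal, ofReal_norm_gramKernel_fresnelKernel_self hν hδ]
  rw [integral_const_mul, hsub]
  push_cast at hone ⊢
  linear_combination hone

theorem integrable_gramKernel_fresnelKernel_self (hν : -1 < ν) (hδ : 0 < δ) (hτ : τ ≠ 0) (y : ℝ) :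
    Integrable
      (gramKernel (gaussPowMeasure δ (2 * ν + 1)) (fresnelKernel ν τ) (fresnelKernel ν τ) y)
      (powMeasure (2 * ν + 1)) := by
  have := isFiniteMeasure_gaussPowMeasure (s := 2 * ν + 1) (by linarith) hδ
  have hmeas := measurable_gramKernel (μ := gaussPowMeasure δ (2 * ν + 1))
    (measurable_uncurry_fresnelKernel ν τ) (measurable_uncurry_fresnelKernel ν τ)
  refine (integrable_norm_iff (hmeas.of_uncurry_left).aestronglyMeasurable).1
    (Integrable.of_integral_ne_zero ?_)
  rw [integral_norm_gramKernel_fresnelKernel_self hν hδ hτ]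
  exact one_ne_zero

variable {f g : ℝ → ℂ}

theorem integral_norm_kernelOp_fresnelKernel_sq_le (hν : -1 / 2 ≤ ν) (hδ : 0 < δ) (hτ : τ ≠ 0)
    (hf : Measurable f) (hfi : Integrable f (powMeasure (2 * ν + 1)))
    (hf2 : Integrable (fun y => ‖f y‖ ^ 2) (powMeasure (2 * ν + 1))) :
    ∫ x, ‖kernelOp (powMeasure (2 * ν + 1)) (fresnelKernel ν τ) f x‖ ^ 2
        ∂gaussPowMeasure δ (2 * ν + 1) ≤
      ∫ y, ‖f y‖ ^ 2 ∂powMeasure (2 * ν + 1) := by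
  have := isFiniteMeasure_gaussPowMeasure (s := 2 * ν + 1) (by linarith) hδ
  have hν' : -1 < ν := by linarith
  refine (integral_norm_kernelOp_sq_le (measurable_uncurry_fresnelKernel ν τ)
    (norm_fresnelKernel_le hν τ)
    (fun y => (integral_norm_gramKernel_fresnelKernel_self hν' hδ hτ y).le)
    (integrable_gramKernel_fresnelKernel_self hν' hδ hτ) hf hfi hf2).trans_eq (one_mul _)

theorem memLp_two_kernelOp_fresnelKernel (hν : -1 / 2 ≤ ν) (hδ : 0 < δ) (τ : ℝ)
    (hf : Measurable f) (hfi : Integrable f (powMeasure (2 * ν + 1))) :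
    MemLp (kernelOp (powMeasure (2 * ν + 1)) (fresnelKernel ν τ) f) 2
      (gaussPowMeasure δ (2 * ν + 1)) := by
  have := isFiniteMeasure_gaussPowMeasure (s := 2 * ν + 1) (by linarith) hδ
  exact MemLp.of_bound (measurable_kernelOp (measurable_uncurry_fresnelKernel ν τ)
    hf).aestronglyMeasurable _
    (Eventually.of_forall (norm_kernelOp_le (norm_fresnelKernel_le hν τ) hfi))

theorem norm_integral_gramKernel_fresnelKernel_mul_le (hν : -1 / 2 ≤ ν) (hδ : 0 < δ) (hτ : τ ≠ 0)
    (hσ : σ ≠ 0) (hf : Measurable f) (hg : Measurable g)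
    (hfi : Integrable f (powMeasure (2 * ν + 1))) (hgi : Integrable g (powMeasure (2 * ν + 1)))
    (hf2 : Integrable (fun y => ‖f y‖ ^ 2) (powMeasure (2 * ν + 1)))
    (hg2 : Integrable (fun y => ‖g y‖ ^ 2) (powMeasure (2 * ν + 1))) :
    ‖∫ p : ℝ × ℝ, gramKernel (gaussPowMeasure δ (2 * ν + 1)) (fresnelKernel ν τ)
        (fresnelKernel ν σ) p.1 p.2 * (f p.1 * conj (g p.2))
        ∂(powMeasure (2 * ν + 1)).prod (powMeasure (2 * ν + 1))‖ ≤
      √(∫ y, ‖f y‖ ^ 2 ∂powMeasure (2 * ν + 1)) * √(∫ y, ‖g y‖ ^ 2 ∂powMeasure (2 * ν + 1)) := by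
  have := isFiniteMeasure_gaussPowMeasure (s := 2 * ν + 1) (by linarith) hδ
  rw [← integral_kernelOp_mul_conj (measurable_uncurry_fresnelKernel ν τ)
    (measurable_uncurry_fresnelKernel ν σ) (norm_fresnelKernel_le hν τ)
    (norm_fresnelKernel_le hν σ) hf hg hfi hgi]
  refine (norm_integral_mul_conj_le_sqrt (memLp_two_kernelOp_fresnelKernel hν hδ τ hf hfi)
    (memLp_two_kernelOp_fresnelKernel hν hδ σ hg hgi)).trans ?_
  gcongr
  · exact integral_norm_kernelOp_fresnelKernel_sq_le hν hδ hτ hf hfi hf2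
  · exact integral_norm_kernelOp_fresnelKernel_sq_le hν hδ hσ hg hgi hg2

end FresnelKernel

section Interpolation

theorem rpow_le_rpow_add_rpow {x c u d : ℝ} (hx : 0 ≤ x) (hc : 0 < c) (hcu : c ≤ u)
    (hud : u ≤ d) : x ^ u ≤ x ^ c + x ^ d := by
  rcases hx.eq_or_lt with rfl | hx
  · rw [Real.zero_rpow (hc.trans_le hcu).ne']
    positivity
  rcases le_total x 1 with h1 | h1
  · exact (Real.rpow_le_rpow_of_exponent_ge hx h1 hcu).trans
      (le_add_of_nonneg_right (Real.rpow_nonneg hx.le d))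
  · exact (Real.rpow_le_rpow_of_exponent_le h1 hud).trans
      (le_add_of_nonneg_left (Real.rpow_nonneg hx.le c))

theorem abs_log_le_rpow_add_rpow_neg {x ε : ℝ} (hx : 0 < x) (hε : 0 < ε) :
    |Real.log x| ≤ (x ^ ε + x ^ (-ε)) / ε := by
  have hlog := Real.log_le_rpow_div hx.le hε
  have hlog_inv := Real.log_le_rpow_div (inv_nonneg.2 hx.le) hε
  rw [Real.log_inv, Real.inv_rpow hx.le, ← Real.rpow_neg hx.le] at hlog_inv
  have hpos : 0 ≤ x ^ ε / ε := by positivity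
  have hneg : 0 ≤ x ^ (-ε) / ε := by positivity
  rw [add_div]
  exact abs_le.2 ⟨by linarith, by linarith⟩

theorem rpow_mul_abs_log_le {x c u d ε : ℝ} (hx : 0 < x) (hc : 0 < c) (hε : 0 < ε)
    (hcu : c + ε ≤ u) (hud : u + ε ≤ d) : x ^ u * |Real.log x| ≤ 2 / ε * (x ^ c + x ^ d) :=
  calc x ^ u * |Real.log x| ≤ x ^ u * ((x ^ ε + x ^ (-ε)) / ε) := by
        gcongr
        exact abs_log_le_rpow_add_rpow_neg hx hε
    _ = (x ^ (u + ε) + x ^ (u + -ε)) / ε := by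
        rw [Real.rpow_add hx, Real.rpow_add hx]
        ring
    _ ≤ ((x ^ c + x ^ d) + (x ^ c + x ^ d)) / ε := by
        gcongr <;> exact rpow_le_rpow_add_rpow hx.le hc (by linarith) (by linarith)
    _ = 2 / ε * (x ^ c + x ^ d) := by ring

theorem norm_cpow_mul_log_le {x c d ε : ℝ} (hx : 0 ≤ x) (hc : 0 < c) (hε : 0 < ε) {w : ℂ}
    (hcw : c + ε ≤ w.re) (hwd : w.re + ε ≤ d) :
    ‖(x : ℂ) ^ w * Complex.log x‖ ≤ 2 / ε * (x ^ c + x ^ d) := by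
  have hw : 0 < w.re := by linarith
  rw [norm_mul, Complex.norm_cpow_eq_rpow_re_of_nonneg hx hw.ne', ← Complex.ofReal_log hx,
    Complex.norm_real, Real.norm_eq_abs]
  rcases hx.eq_or_lt with rfl | hx
  · rw [Real.log_zero, abs_zero, mul_zero]
    positivity
  · exact rpow_mul_abs_log_le hx hc hε hcw hwd

variable {Y Z : Type*} {w : ℂ}

theorem norm_mul_cpow_le {κ : Y → ℂ} {h : Y → ℝ} {M : ℝ} (hκM : ∀ y, ‖κ y‖ ≤ M)
    (hh0 : ∀ y, 0 ≤ h y) (hw : 0 < w.re) (y : Y) :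
    ‖κ y * (h y : ℂ) ^ w‖ ≤ M * h y ^ w.re := by
  rw [norm_mul, Complex.norm_cpow_eq_rpow_re_of_nonneg (hh0 y) hw.ne']
  exact mul_le_mul_of_nonneg_right (hκM y) (Real.rpow_nonneg (hh0 y) _)

/-- The analytic family `(f / |f|) |f| ^ w` through `f`, attained at `w = 1`. -/
noncomputable def phasePow (f : Y → ℂ) (w : ℂ) (y : Y) : ℂ :=
  f y / (‖f y‖ : ℂ) * (‖f y‖ : ℂ) ^ w

theorem norm_div_norm_le_one (z : ℂ) : ‖z / (‖z‖ : ℂ)‖ ≤ 1 := by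
  rw [norm_div, Complex.norm_real, norm_norm]
  exact div_self_le_one _

theorem phasePow_one (f : Y → ℂ) (y : Y) : phasePow f 1 y = f y := by
  rcases eq_or_ne (f y) 0 with h0 | h0
  · simp [phasePow, h0]
  · rw [phasePow, Complex.cpow_one, div_mul_cancel₀]
    simpa using h0

theorem norm_phasePow (f : Y → ℂ) (hw : 0 < w.re) (y : Y) :
    ‖phasePow f w y‖ = ‖f y‖ ^ w.re := by
  rw [phasePow, norm_mul, Complex.norm_cpow_eq_rpow_re_of_nonneg (norm_nonneg _) hw.ne', norm_div,
    Complex.norm_real, norm_norm]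
  rcases eq_or_ne (f y) 0 with h0 | h0
  · rw [h0, norm_zero, Real.zero_rpow hw.ne', mul_zero]
  · rw [div_self (norm_ne_zero_iff.2 h0), one_mul]

theorem mul_phasePow_mul_conj_phasePow (k : ℂ) (f : Y → ℂ) (g : Z → ℂ) (w : ℂ) (y : Y) (z : Z) :
    k * (phasePow f w y * conj (phasePow g (conj w) z)) =
      k * (f y / (‖f y‖ : ℂ) * conj (g z / (‖g z‖ : ℂ))) * ((‖f y‖ * ‖g z‖ : ℝ) : ℂ) ^ w := by
  have harg : (‖g z‖ : ℂ).arg ≠ Real.pi := by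
    rw [Complex.arg_ofReal_of_nonneg (norm_nonneg _)]
    exact Real.pi_ne_zero.symm
  rw [phasePow, phasePow, map_mul, ← Complex.conj_cpow _ _ harg, Complex.conj_ofReal,
    Complex.ofReal_mul, Complex.mul_cpow_ofReal_nonneg (norm_nonneg _) (norm_nonneg _)]
  ring

theorem norm_mul_phase_mul_conj_phase_le {k : Y × Z → ℂ} {M : ℝ} (hkM : ∀ q, ‖k q‖ ≤ M)
    (f : Y → ℂ) (g : Z → ℂ) (q : Y × Z) :
    ‖k q * (f q.1 / (‖f q.1‖ : ℂ) * conj (g q.2 / (‖g q.2‖ : ℂ)))‖ ≤ M := by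
  rw [norm_mul, norm_mul, RCLike.norm_conj]
  refine (mul_le_of_le_one_right (norm_nonneg _) ?_).trans (hkM q)
  exact mul_le_one₀ (norm_div_norm_le_one _) (norm_nonneg _) (norm_div_norm_le_one _)

variable [MeasurableSpace Y] [MeasurableSpace Z] {m : Measure Y} {n : Measure Z}

section IntegralCpow

variable {κ : Y → ℂ} {h : Y → ℝ} {M : ℝ}

theorem norm_integral_mul_cpow_le (hκM : ∀ y, ‖κ y‖ ≤ M) (hh0 : ∀ y, 0 ≤ h y)
    (hw : 0 < w.re) (hint : Integrable (fun y => h y ^ w.re) m) :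
    ‖∫ y, κ y * (h y : ℂ) ^ w ∂m‖ ≤ M * ∫ y, h y ^ w.re ∂m := by
  rw [← integral_const_mul]
  exact norm_integral_le_of_norm_le (hint.const_mul M)
    (Eventually.of_forall (norm_mul_cpow_le hκM hh0 hw))

theorem differentiableOn_integral_mul_cpow (hκ : Measurable κ) (hκM : ∀ y, ‖κ y‖ ≤ M)
    (hh : Measurable h) (hh0 : ∀ y, 0 ≤ h y)
    (hint : ∀ s : ℝ, 0 < s → Integrable (fun y => h y ^ s) m) :
    DifferentiableOn ℂ (fun w : ℂ => ∫ y, κ y * (h y : ℂ) ^ w ∂m) {w | 0 < w.re} := by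
  intro w₀ (hw₀ : 0 < w₀.re)
  have hopen : IsOpen (Complex.re ⁻¹' Ioo (w₀.re / 2) (3 * w₀.re / 2)) :=
    isOpen_Ioo.preimage Complex.continuous_re
  have hmem : w₀ ∈ Complex.re ⁻¹' Ioo (w₀.re / 2) (3 * w₀.re / 2) :=
    ⟨by linarith, by linarith⟩
  have hmeas (w : ℂ) : Measurable fun y => κ y * (h y : ℂ) ^ w := by fun_prop
  have hderiv := hasDerivAt_integral_of_dominated_loc_of_deriv_le (μ := m) (𝕜 := ℂ)
    (F := fun w y => κ y * (h y : ℂ) ^ w)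
    (F' := fun w y => κ y * ((h y : ℂ) ^ w * Complex.log (h y)))
    (bound := fun y => M * (2 / (w₀.re / 4) * (h y ^ (w₀.re / 4) + h y ^ (2 * w₀.re))))
    (hopen.mem_nhds hmem) (Eventually.of_forall fun w => (hmeas w).aestronglyMeasurable)
    (((hint _ hw₀).const_mul M).mono' (hmeas w₀).aestronglyMeasurable
      (Eventually.of_forall (norm_mul_cpow_le hκM hh0 hw₀)))
    (Measurable.aestronglyMeasurable (by fun_prop)) (Eventually.of_forall fun y w hw => ?_)
    ((((hint _ (by linarith)).add (hint _ (by linarith))).const_mul _).const_mul _)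
    (Eventually.of_forall fun y w hw => ?_)
  · exact hderiv.2.differentiableAt.differentiableWithinAt
  · have hM : 0 ≤ M := (norm_nonneg _).trans (hκM y)
    rw [norm_mul]
    gcongr
    · exact hκM y
    · exact norm_cpow_mul_log_le (hh0 y) (by linarith) (by linarith [hw.1]) (by linarith [hw.1])
        (by linarith [hw.2])
  · have hw0 : w ≠ 0 := by
      rintro rfl
      linarith [hw.1, Complex.zero_re]
    simpa only [mul_one, id] using ((hasDerivAt_id w).const_cpow (Or.inr hw0)).const_mul (κ y)

end IntegralCpow

/-- `f` is measurable and belongs to `L^s(m)` for every exponent `0 < s < ∞`: the class of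
functions to which the interpolation theorem is applied. -/
structure FiniteMoments (f : Y → ℂ) (m : Measure Y) : Prop where
  measurable : Measurable f
  integrable_norm_rpow : ∀ s : ℝ, 0 < s → Integrable (fun y => ‖f y‖ ^ s) m

variable {f : Y → ℂ} {g : Z → ℂ}

theorem FiniteMoments.phasePow (hf : FiniteMoments f m) (hw : 0 < w.re) :
    FiniteMoments (phasePow f w) m where
  measurable := by
    have := hf.measurable
    unfold _root_.phasePow
    fun_prop
  integrable_norm_rpow s hs := by
    simpa only [norm_phasePow f hw, ← Real.rpow_mul (norm_nonneg _)] using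
      hf.integrable_norm_rpow _ (mul_pos hw hs)

theorem FiniteMoments.integrable (hf : FiniteMoments f m) : Integrable f m :=
  (integrable_norm_iff hf.measurable.aestronglyMeasurable).1
    (by simpa using hf.integrable_norm_rpow 1 one_pos)

theorem FiniteMoments.integrable_norm_sq (hf : FiniteMoments f m) :
    Integrable (fun y => ‖f y‖ ^ 2) m := by
  simpa using hf.integrable_norm_rpow 2 two_pos

theorem FiniteMoments.integrable_norm_mul_norm_rpow [SFinite n] (hf : FiniteMoments f m)
    (hg : FiniteMoments g n) {s : ℝ} (hs : 0 < s) :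
    Integrable (fun q : Y × Z => (‖f q.1‖ * ‖g q.2‖) ^ s) (m.prod n) := by
  simpa only [Real.mul_rpow (norm_nonneg _) (norm_nonneg _)] using
    (hf.integrable_norm_rpow s hs).mul_prod (hg.integrable_norm_rpow s hs)

theorem integral_norm_phasePow_sq {p : ℝ} (hp : 0 < p) (hw : w.re = p / 2) (f : Y → ℂ) :
    ∫ y, ‖phasePow f w y‖ ^ 2 ∂m = ∫ y, ‖f y‖ ^ p ∂m := by
  refine integral_congr_ae (Eventually.of_forall fun y => ?_)
  dsimp only
  rw [norm_phasePow f (by linarith), hw, ← Real.rpow_mul_natCast (norm_nonneg _)]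
  norm_num

theorem sqrt_rpow_mul_rpow_eq {A M p : ℝ} (hA : 0 ≤ A) (hM : 0 ≤ M) (hp : 1 ≤ p) (hp2 : p ≤ 2) :
    √A ^ (1 - (1 - p / 2) / (p - p / 2)) * (M * A) ^ ((1 - p / 2) / (p - p / 2)) =
      M ^ (2 / p - 1) * A ^ (1 / p) := by
  have hp0 : 0 < p := by linarith
  have h1 : 1 / p ≤ 1 := (div_le_one hp0).2 hp
  have h2 : 1 ≤ 2 / p := (one_le_div hp0).2 hp2
  have hθ : (1 - p / 2) / (p - p / 2) = 2 / p - 1 := by field_simp; ring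
  have hexp : 1 / p = 1 / 2 * (1 - (2 / p - 1)) + (2 / p - 1) := by ring
  rw [hθ, Real.mul_rpow hM hA, Real.sqrt_eq_rpow, ← Real.rpow_mul hA, mul_left_comm, hexp,
    ← Real.rpow_add_of_nonneg hA (by rw [mul_sub, mul_sub]; linarith) (by linarith)]

variable {k : Y × Z → ℂ} {M p : ℝ}

theorem measurable_mul_phase_mul_conj_phase (hk : Measurable k) (hf : Measurable f)
    (hg : Measurable g) :
    Measurable fun q : Y × Z => k q * (f q.1 / (‖f q.1‖ : ℂ) * conj (g q.2 / (‖g q.2‖ : ℂ))) := by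
  fun_prop

theorem differentiableOn_integral_mul_phasePow [SFinite n] (hk : Measurable k)
    (hkM : ∀ q, ‖k q‖ ≤ M) (hf : FiniteMoments f m) (hg : FiniteMoments g n) :
    DifferentiableOn ℂ (fun w => ∫ q : Y × Z,
      k q * (phasePow f w q.1 * conj (phasePow g (conj w) q.2)) ∂m.prod n) {w | 0 < w.re} := by
  have := hf.measurable
  have := hg.measurable
  simp only [mul_phasePow_mul_conj_phasePow]
  exact differentiableOn_integral_mul_cpow
    (measurable_mul_phase_mul_conj_phase hk hf.measurable hg.measurable)
    (norm_mul_phase_mul_conj_phase_le hkM f g) (by fun_prop) (fun q => by positivity)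
    fun s hs => hf.integrable_norm_mul_norm_rpow hg hs

theorem norm_integral_mul_phasePow_le [SFinite n] (hkM : ∀ q, ‖k q‖ ≤ M)
    (hf : FiniteMoments f m) (hg : FiniteMoments g n) (hw : 0 < w.re) :
    ‖∫ q : Y × Z, k q * (phasePow f w q.1 * conj (phasePow g (conj w) q.2)) ∂m.prod n‖ ≤
      M * ∫ q : Y × Z, (‖f q.1‖ * ‖g q.2‖) ^ w.re ∂m.prod n := by
  simp only [mul_phasePow_mul_conj_phasePow]
  exact norm_integral_mul_cpow_le (norm_mul_phase_mul_conj_phase_le hkM f g)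
    (fun q => by positivity) hw (hf.integrable_norm_mul_norm_rpow hg hw)

theorem bddAbove_norm_integral_mul_phasePow [SFinite n] (hM : 0 ≤ M) (hkM : ∀ q, ‖k q‖ ≤ M)
    (hf : FiniteMoments f m) (hg : FiniteMoments g n) {c d : ℝ} (hc : 0 < c) :
    BddAbove ((norm ∘ fun w => ∫ q : Y × Z,
      k q * (phasePow f w q.1 * conj (phasePow g (conj w) q.2)) ∂m.prod n) ''
        (Complex.re ⁻¹' Icc c d)) := by
  refine ⟨M * ∫ q : Y × Z, ((‖f q.1‖ * ‖g q.2‖) ^ c + (‖f q.1‖ * ‖g q.2‖) ^ d) ∂m.prod n, ?_⟩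
  rintro _ ⟨w, ⟨hcw, hwd⟩, rfl⟩
  have hw : 0 < w.re := hc.trans_le hcw
  refine (norm_integral_mul_phasePow_le hkM hf hg hw).trans (mul_le_mul_of_nonneg_left ?_ hM)
  refine integral_mono (hf.integrable_norm_mul_norm_rpow hg hw)
    ((hf.integrable_norm_mul_norm_rpow hg hc).add
      (hf.integrable_norm_mul_norm_rpow hg (hw.trans_le hwd))) fun q => ?_
  exact rpow_le_rpow_add_rpow (by positivity) hc hcw hwd

-- Riesz–Thorin: the three lines theorem on `p / 2 ≤ re w ≤ p` for the form evaluated at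
-- `phasePow f w` and `phasePow g w̄`, which are `f` and `g` at `w = 1`.
theorem norm_integral_mul_conj_le_interpolated [SFinite m] [SFinite n]
    (hk : Measurable k) (hM : 0 ≤ M) (hkM : ∀ q, ‖k q‖ ≤ M)
    (hL2 : ∀ f g, FiniteMoments f m → FiniteMoments g n →
      ‖∫ q, k q * (f q.1 * conj (g q.2)) ∂m.prod n‖ ≤
        √(∫ y, ‖f y‖ ^ 2 ∂m) * √(∫ z, ‖g z‖ ^ 2 ∂n))
    (hf : FiniteMoments f m) (hg : FiniteMoments g n) (hp : 1 ≤ p) (hp2 : p ≤ 2) :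
    ‖∫ q, k q * (f q.1 * conj (g q.2)) ∂m.prod n‖ ≤
      M ^ (2 / p - 1) * ((∫ y, ‖f y‖ ^ p ∂m) * ∫ z, ‖g z‖ ^ p ∂n) ^ (1 / p) := by
  have hp0 : 0 < p / 2 := by linarith
  have hf0 : 0 ≤ ∫ y, ‖f y‖ ^ p ∂m := integral_nonneg fun y => by positivity
  have hg0 : 0 ≤ ∫ z, ‖g z‖ ^ p ∂n := integral_nonneg fun z => by positivity
  have hstrip : closure (Complex.HadamardThreeLines.verticalStrip (p / 2) p) ⊆
      {w | 0 < w.re} := fun w hw =>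
    hp0.trans_le (closure_minimal (preimage_mono Ioo_subset_Icc_self)
      (isClosed_Icc.preimage Complex.continuous_re) hw).1
  have hthree := Complex.HadamardThreeLines.norm_le_interp_of_mem_verticalClosedStrip'
    (f := fun w => ∫ q : Y × Z,
      k q * (phasePow f w q.1 * conj (phasePow g (conj w) q.2)) ∂m.prod n) (z := 1)
    (a := √((∫ y, ‖f y‖ ^ p ∂m) * ∫ z, ‖g z‖ ^ p ∂n))
    (b := M * ((∫ y, ‖f y‖ ^ p ∂m) * ∫ z, ‖g z‖ ^ p ∂n)) (half_lt_self (by linarith))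
    ⟨by simp; linarith, by simpa⟩
    ((differentiableOn_integral_mul_phasePow hk hkM hf hg).mono hstrip).diffContOnCl
    (bddAbove_norm_integral_mul_phasePow hM hkM hf hg hp0) (fun w (hw : w.re = p / 2) => ?_)
    (fun w (hw : w.re = p) => ?_)
  · rwa [Complex.one_re, sqrt_rpow_mul_rpow_eq (mul_nonneg hf0 hg0) hM hp hp2, map_one,
      funext (phasePow_one f), funext (phasePow_one g)] at hthree
  · have hconj : (conj w).re = p / 2 := by rw [Complex.conj_re, hw]
    have h := hL2 _ _ (hf.phasePow (hp0.trans_eq hw.symm)) (hg.phasePow (hp0.trans_eq hconj.symm))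
    rwa [integral_norm_phasePow_sq (by linarith) hw,
      integral_norm_phasePow_sq (by linarith) hconj, ← Real.sqrt_mul hf0] at h
  · refine (norm_integral_mul_phasePow_le hkM hf hg (by linarith)).trans_eq ?_
    simp only [hw, Real.mul_rpow (norm_nonneg _) (norm_nonneg _)]
    rw [← integral_prod_mul]

end Interpolation

section HardyLittlewoodSobolev

theorem lintegral_comp_abs (f : ℝ → ENNReal) :
    ∫⁻ u : ℝ, f |u| = 2 * ∫⁻ u in Ioi (0 : ℝ), f u := by
  have hneg : ∫⁻ u in Iic (0 : ℝ), f |u| = ∫⁻ u in Ioi (0 : ℝ), f u := by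
    have h := (Measure.measurePreserving_neg (volume : Measure ℝ)).setLIntegral_comp_preimage_emb
      (MeasurableEquiv.neg ℝ).measurableEmbedding f (Ioi 0)
    rw [← setLIntegral_congr (Iio_ae_eq_Iic (μ := volume) (a := (0 : ℝ))), ← h,
      show Neg.neg ⁻¹' Ioi (0 : ℝ) = Iio 0 by simp]
    exact setLIntegral_congr_fun measurableSet_Iio fun u hu => by rw [abs_of_neg hu]
  rw [← lintegral_add_compl _ (measurableSet_Ioi (a := (0 : ℝ))), compl_Ioi, hneg, two_mul]
  congr 1
  exact setLIntegral_congr_fun measurableSet_Ioi fun u hu => by rw [abs_of_pos hu]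

theorem setLIntegral_comp_abs_sub {T : Set ℝ} (hT : MeasurableSet T) (g : ℝ → ENNReal) (t : ℝ) :
    ∫⁻ s in {s | |t - s| ∈ T}, g |t - s| = 2 * ∫⁻ u in Ioi 0 ∩ T, g u := by
  have hset : MeasurableSet {s | |t - s| ∈ T} :=
    hT.preimage (f := fun s => |t - s|) (by fun_prop)
  rw [inter_comm, ← setLIntegral_indicator hT, ← lintegral_comp_abs,
    ← lintegral_sub_left_eq_self (fun u => T.indicator g |u|) t, ← lintegral_indicator hset]
  rfl

variable {γ R : ℝ}

theorem setLIntegral_abs_sub_rpow_near (hγ1 : γ < 1) (hR : 0 ≤ R) (t : ℝ) :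
    ∫⁻ s in {s | |t - s| ∈ Iic R}, ENNReal.ofReal (|t - s| ^ (-γ)) =
      ENNReal.ofReal (2 / (1 - γ) * R ^ (1 - γ)) := by
  have hint : IntervalIntegrable (fun x : ℝ => x ^ (-γ)) volume 0 R :=
    intervalIntegral.intervalIntegrable_rpow' (by linarith)
  rw [intervalIntegrable_iff_integrableOn_Ioc_of_le hR] at hint
  have hnonneg : 0 ≤ᵐ[volume.restrict (Ioc 0 R)] fun x : ℝ => x ^ (-γ) :=
    ae_restrict_of_forall_mem measurableSet_Ioc fun x hx => Real.rpow_nonneg hx.1.le _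
  rw [setLIntegral_comp_abs_sub measurableSet_Iic (fun u => ENNReal.ofReal (u ^ (-γ))),
    Ioi_inter_Iic, ← ofReal_integral_eq_lintegral_ofReal hint hnonneg,
    ← intervalIntegral.integral_of_le hR, integral_rpow (Or.inl (by linarith)),
    Real.zero_rpow (by linarith), sub_zero, neg_add_eq_sub, ← ENNReal.ofReal_ofNat,
    ← ENNReal.ofReal_mul zero_le_two, mul_div_left_comm, mul_comm, div_mul_eq_mul_div]

theorem setLIntegral_abs_sub_rpow_far (hγ : 1 < γ) (hR : 0 < R) (t : ℝ) :
    ∫⁻ s in {s | |t - s| ∈ Ioi R}, ENNReal.ofReal (|t - s| ^ (-γ)) =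
      ENNReal.ofReal (2 / (γ - 1) * R ^ (1 - γ)) := by
  have hint := integrableOn_Ioi_rpow_of_lt (a := -γ) (by linarith) hR
  have hnonneg : 0 ≤ᵐ[volume.restrict (Ioi R)] fun x : ℝ => x ^ (-γ) :=
    ae_restrict_of_forall_mem measurableSet_Ioi fun x hx => Real.rpow_nonneg (hR.trans hx).le _
  rw [setLIntegral_comp_abs_sub measurableSet_Ioi (fun u => ENNReal.ofReal (u ^ (-γ))),
    Ioi_inter_Ioi, sup_of_le_right hR.le, ← ofReal_integral_eq_lintegral_ofReal hint hnonneg,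
    integral_Ioi_rpow_of_lt (by linarith) hR, ← ENNReal.ofReal_ofNat,
    ← ENNReal.ofReal_mul zero_le_two, neg_add_eq_sub]
  congr 1
  rw [← neg_sub γ 1, neg_div_neg_eq, mul_div_left_comm, mul_comm]

section Abstract

variable {Y : Type*} [MeasurableSpace Y] {μ : Measure Y} {φ k : Y → ENNReal} {p q : ℝ}

theorem setLIntegral_sublevel_mul_le (hφ : Measurable φ) (hk : Measurable k)
    (hpq : p.HolderConjugate q) (h : ENNReal) {N : Set Y} (hN : MeasurableSet N) :
    ∫⁻ s in {s | φ s ≤ h}, φ s * k s ∂μ ≤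
      h * ∫⁻ s in N, k s ∂μ +
        (∫⁻ s, φ s ^ p ∂μ) ^ (1 / p) * (∫⁻ s in Nᶜ, k s ^ q ∂μ) ^ (1 / q) := by
  have hS : MeasurableSet {s | φ s ≤ h} := measurableSet_le hφ measurable_const
  rw [← lintegral_inter_add_sdiff _ _ hN]
  refine add_le_add ?_ ?_
  · rw [← lintegral_const_mul _ hk]
    refine (setLIntegral_mono' (hS.inter hN) fun s hs => ?_).trans
      (lintegral_mono_set inter_subset_right)
    exact mul_le_mul_left hs.1 _
  · refine (lintegral_mono_set (sdiff_subset_compl _ _)).trans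
      ((ENNReal.lintegral_mul_le_Lp_mul_Lq _ hpq hφ.aemeasurable hk.aemeasurable).trans ?_)
    gcongr
    · exact one_div_nonneg.2 hpq.nonneg
    · exact Measure.restrict_le_self

theorem lintegral_lintegral_add_swap [SFinite μ] {A : Y → Y → ENNReal}
    (hA : Measurable A.uncurry) :
    ∫⁻ t, ∫⁻ s, (A t s + A s t) ∂μ ∂μ = 2 * ∫⁻ t, ∫⁻ s, A t s ∂μ ∂μ := by
  have hswap : ∫⁻ t, ∫⁻ s, A s t ∂μ ∂μ = ∫⁻ t, ∫⁻ s, A t s ∂μ ∂μ :=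
    lintegral_lintegral_swap (f := fun t s => A s t) (hA.comp measurable_swap).aemeasurable
  have hinner (t : Y) : ∫⁻ s, (A t s + A s t) ∂μ = ∫⁻ s, A t s ∂μ + ∫⁻ s, A s t ∂μ :=
    lintegral_add_left (hA.comp measurable_prodMk_left) _
  have houter : Measurable fun t => ∫⁻ s, A t s ∂μ := hA.lintegral_prod_right'
  simp only [hinner]
  rw [two_mul, lintegral_add_left houter, hswap]

theorem lintegral_lintegral_mul_symm_le [SFinite μ] {k : Y → Y → ENNReal} (hφ : Measurable φ)
    (hk : Measurable k.uncurry) (hsymm : ∀ t s, k t s = k s t) :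
    ∫⁻ t, ∫⁻ s, φ t * φ s * k t s ∂μ ∂μ ≤
      2 * ∫⁻ t, φ t * ∫⁻ s in {s | φ s ≤ φ t}, φ s * k t s ∂μ ∂μ := by
  let A (t s : Y) : ENNReal := {s | φ s ≤ φ t}.indicator (fun s => φ t * (φ s * k t s)) s
  have hA : Measurable A.uncurry :=
    Measurable.indicator (s := {q : Y × Y | φ q.2 ≤ φ q.1})
      (f := fun q : Y × Y => φ q.1 * (φ q.2 * k.uncurry q)) (by fun_prop)
      (measurableSet_le (by fun_prop) (by fun_prop))
  have hA_of_le {t s : Y} (hts : φ s ≤ φ t) : A t s = φ t * (φ s * k t s) :=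
    indicator_of_mem (s := {s | φ s ≤ φ t}) hts _
  have hle (t s : Y) : φ t * φ s * k t s ≤ A t s + A s t := by
    rcases le_total (φ s) (φ t) with hts | hts
    · exact le_add_right (by rw [hA_of_le hts, mul_assoc])
    · exact le_add_left (by rw [hA_of_le hts, hsymm, mul_left_comm, mul_assoc])
  have hinner (t : Y) : ∫⁻ s, A t s ∂μ = φ t * ∫⁻ s in {s | φ s ≤ φ t}, φ s * k t s ∂μ := by
    have hkt : Measurable (k t) := hk.comp measurable_prodMk_left
    rw [← lintegral_const_mul _ (by fun_prop),
      ← lintegral_indicator (measurableSet_le hφ measurable_const)]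
  calc ∫⁻ t, ∫⁻ s, φ t * φ s * k t s ∂μ ∂μ
      ≤ ∫⁻ t, ∫⁻ s, (A t s + A s t) ∂μ ∂μ := lintegral_mono fun t => lintegral_mono (hle t)
    _ = 2 * ∫⁻ t, ∫⁻ s, A t s ∂μ ∂μ := lintegral_lintegral_add_swap hA
    _ = 2 * ∫⁻ t, φ t * ∫⁻ s in {s | φ s ≤ φ t}, φ s * k t s ∂μ ∂μ := by simp only [hinner]

end Abstract

variable {φ : ℝ → ENNReal} {Λ h : ℝ}

theorem rpow_balance {p : ℝ} (hγ1 : γ < 1) (hp : p = 2 / (2 - γ)) (hΛ : 0 < Λ)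
    (hh : 0 < h) :
    h * (2 / (1 - γ) * (Λ * h ^ (-p)) ^ (1 - γ)) +
        Λ ^ (1 / p) * (2 * (Λ * h ^ (-p))⁻¹) ^ (γ / 2) =
      (2 / (1 - γ) + 2 ^ (γ / 2)) * Λ ^ (1 - γ) * h ^ (p - 1) := by
  have h2γ : 2 - γ ≠ 0 := by linarith
  have hnear : (Λ * h ^ (-p)) ^ (1 - γ) = Λ ^ (1 - γ) * h ^ (p - 1) / h := by
    rw [Real.mul_rpow hΛ.le (by positivity), ← Real.rpow_mul hh.le, mul_div_assoc,
      ← Real.rpow_sub_one hh.ne']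
    congr 2
    rw [hp]
    field_simp
    ring
  have hfar : (2 * (Λ * h ^ (-p))⁻¹) ^ (γ / 2) =
      2 ^ (γ / 2) * (Λ ^ (-(γ / 2)) * h ^ (p - 1)) := by
    rw [mul_inv, Real.mul_rpow zero_le_two (by positivity), ← Real.rpow_neg_one Λ,
      ← Real.rpow_neg hh.le, Real.mul_rpow (by positivity) (by positivity), ← Real.rpow_mul hΛ.le,
      ← Real.rpow_mul hh.le, neg_one_mul, neg_neg]
    congr 3
    rw [hp]
    field_simp
    ring
  have hΛp : Λ ^ (1 / p) * Λ ^ (-(γ / 2)) = Λ ^ (1 - γ) := by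
    rw [← Real.rpow_add hΛ, hp]
    congr 1
    field_simp
    ring
  rw [hnear, hfar, ← hΛp]
  field_simp

/- Bounding `φ` by `h` within distance `R` of `t` and using Hölder's inequality beyond it, the two
parts balance for `R = Λ h ^ (-p)`. -/
theorem setLIntegral_sublevel_mul_abs_sub_rpow_le {p : ℝ} (hφ : Measurable φ) (hγ0 : 0 < γ)
    (hγ1 : γ < 1) (hp : p = 2 / (2 - γ)) (hΛ : 0 < Λ) (hφΛ : ∫⁻ s, φ s ^ p = ENNReal.ofReal Λ)
    (hh : 0 < h) (t : ℝ) :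
    ∫⁻ s in {s | φ s ≤ ENNReal.ofReal h}, φ s * ENNReal.ofReal (|t - s| ^ (-γ)) ≤
      ENNReal.ofReal ((2 / (1 - γ) + 2 ^ (γ / 2)) * Λ ^ (1 - γ) * h ^ (p - 1)) := by
  have h2γ : 0 < 2 - γ := by linarith
  have hpq : p.HolderConjugate (2 / γ) := by
    rw [Real.holderConjugate_iff, hp]
    exact ⟨(one_lt_div h2γ).2 (by linarith), by field_simp; ring⟩
  have hR : 0 < Λ * h ^ (-p) := by positivity
  have hpow (s : ℝ) : ENNReal.ofReal (|t - s| ^ (-γ)) ^ (2 / γ) =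
      ENNReal.ofReal (|t - s| ^ (-2 : ℝ)) := by
    rw [ENNReal.ofReal_rpow_of_nonneg (by positivity) (by positivity),
      ← Real.rpow_mul (abs_nonneg _)]
    congr 2
    field_simp
  have hN : MeasurableSet {s | |t - s| ∈ Iic (Λ * h ^ (-p))} :=
    measurableSet_le (f := fun s => |t - s|) (by fun_prop) measurable_const
  have hk : Measurable fun s => ENNReal.ofReal (|t - s| ^ (-γ)) := by fun_prop
  refine (setLIntegral_sublevel_mul_le hφ hk hpq _ hN).trans_eq ?_
  have hcompl : {s | |t - s| ∈ Iic (Λ * h ^ (-p))}ᶜ = {s | |t - s| ∈ Ioi (Λ * h ^ (-p))} := by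
    ext
    simp
  rw [← rpow_balance hγ1 hp hΛ hh, setLIntegral_abs_sub_rpow_near hγ1 hR.le, hcompl]
  simp only [hpow]
  rw [setLIntegral_abs_sub_rpow_far one_lt_two hR, hφΛ, ENNReal.ofReal_rpow_of_pos hΛ,
    ENNReal.ofReal_rpow_of_nonneg (by positivity) (by positivity), ← ENNReal.ofReal_mul hh.le,
    ← ENNReal.ofReal_mul (by positivity), ← ENNReal.ofReal_add (by positivity) (by positivity),
    one_div_div, ← Real.rpow_neg_one (Λ * h ^ (-p))]
  norm_num

theorem lintegral_mul_setLIntegral_sublevel_le {p : ℝ} (hφ : Measurable φ) (hγ0 : 0 < γ)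
    (hγ1 : γ < 1) (hp : p = 2 / (2 - γ)) (hΛ : 0 < Λ) (hφΛ : ∫⁻ s, φ s ^ p = ENNReal.ofReal Λ) :
    ∫⁻ t, φ t * ∫⁻ s in {s | φ s ≤ φ t}, φ s * ENNReal.ofReal (|t - s| ^ (-γ)) ≤
      ENNReal.ofReal ((2 / (1 - γ) + 2 ^ (γ / 2)) * Λ ^ (2 - γ)) := by
  have h2γ : 0 < 2 - γ := by linarith
  have hp0 : 0 < p := by rw [hp]; positivity
  have hfinite : ∀ᵐ t, φ t < ⊤ := by
    filter_upwards [ae_lt_top (hφ.pow_const p) (hφΛ.trans_ne ENNReal.ofReal_ne_top)] with t ht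
    exact (ENNReal.rpow_lt_top_iff_of_pos hp0).1 ht
  have hbound (t : ℝ) (ht : φ t < ⊤) :
      φ t * ∫⁻ s in {s | φ s ≤ φ t}, φ s * ENNReal.ofReal (|t - s| ^ (-γ)) ≤
        ENNReal.ofReal ((2 / (1 - γ) + 2 ^ (γ / 2)) * Λ ^ (1 - γ)) * φ t ^ p := by
    obtain ⟨h, hh, hφt⟩ : ∃ h : ℝ, 0 ≤ h ∧ φ t = ENNReal.ofReal h :=
      ⟨(φ t).toReal, ENNReal.toReal_nonneg, (ENNReal.ofReal_toReal ht.ne).symm⟩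
    rcases hh.eq_or_lt with rfl | hh
    · simp [hφt]
    have hpow : ENNReal.ofReal h ^ p = ENNReal.ofReal h * ENNReal.ofReal (h ^ (p - 1)) := by
      rw [ENNReal.ofReal_rpow_of_pos hh, ← ENNReal.ofReal_mul hh.le, Real.rpow_sub_one hh.ne',
        mul_div_cancel₀ _ hh.ne']
    rw [hφt, hpow, mul_left_comm, ← ENNReal.ofReal_mul (by positivity)]
    gcongr
    exact setLIntegral_sublevel_mul_abs_sub_rpow_le hφ hγ0 hγ1 hp hΛ hφΛ hh t
  calc _ ≤ ∫⁻ t, ENNReal.ofReal ((2 / (1 - γ) + 2 ^ (γ / 2)) * Λ ^ (1 - γ)) * φ t ^ p :=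
        lintegral_mono_ae (hfinite.mono hbound)
    _ = ENNReal.ofReal ((2 / (1 - γ) + 2 ^ (γ / 2)) * Λ ^ (2 - γ)) := by
        rw [lintegral_const_mul _ (hφ.pow_const p), hφΛ, ← ENNReal.ofReal_mul (by positivity),
          mul_assoc, ← Real.rpow_add_one hΛ.ne']
        ring_nf

theorem lintegral_lintegral_mul_abs_sub_rpow_le {p : ℝ} (hφ : Measurable φ) (hγ0 : 0 < γ)
    (hγ1 : γ < 1) (hp : p = 2 / (2 - γ)) :
    ∫⁻ t, ∫⁻ s, φ t * φ s * ENNReal.ofReal (|t - s| ^ (-γ)) ≤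
      ENNReal.ofReal (2 * (2 / (1 - γ) + 2 ^ (γ / 2))) * (∫⁻ t, φ t ^ p) ^ (2 - γ) := by
  have h2γ : 0 < 2 - γ := by linarith
  have hp0 : 0 < p := by rw [hp]; positivity
  rcases eq_or_ne (∫⁻ t, φ t ^ p) 0 with hzero | hzero
  · have hφ0 : ∀ᵐ t, φ t = 0 := by
      filter_upwards [(lintegral_eq_zero_iff (hφ.pow_const p)).1 hzero] with t ht
      exact (ENNReal.rpow_eq_zero_iff_of_pos hp0).1 ht
    refine le_of_eq_of_le ?_ zero_le
    refine (lintegral_congr_ae ?_).trans lintegral_zero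
    filter_upwards [hφ0] with t ht
    simp [ht]
  rcases eq_or_ne (∫⁻ t, φ t ^ p) ⊤ with htop | htop
  · have hC : ENNReal.ofReal (2 * (2 / (1 - γ) + 2 ^ (γ / 2))) ≠ 0 :=
      (ENNReal.ofReal_pos.2 (by positivity)).ne'
    rw [htop, ENNReal.top_rpow_of_pos h2γ, ENNReal.mul_top hC]
    exact le_top
  have hsymm (t s : ℝ) : ENNReal.ofReal (|t - s| ^ (-γ)) = ENNReal.ofReal (|s - t| ^ (-γ)) := by
    rw [abs_sub_comm]
  refine (lintegral_lintegral_mul_symm_le hφ (by fun_prop) hsymm).trans ?_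
  have hΛ := ENNReal.toReal_pos hzero htop
  rw [← ENNReal.ofReal_toReal htop, ENNReal.ofReal_rpow_of_pos hΛ,
    ← ENNReal.ofReal_mul (by positivity), mul_assoc 2, ENNReal.ofReal_mul zero_le_two,
    ENNReal.ofReal_ofNat]
  gcongr
  exact lintegral_mul_setLIntegral_sublevel_le hφ hγ0 hγ1 hp hΛ (ENNReal.ofReal_toReal htop).symm

end HardyLittlewoodSobolev

section MixedNorm

theorem LrA_eq_integral_powMeasure (a r : ℝ) (f : ℝ → ℂ) :
    LrA a r f = (∫ y, ‖f y‖ ^ r ∂powMeasure a) ^ (1 / r) := by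
  simp only [LrA, integral_powMeasure, smul_eq_mul, mul_comm]

theorem LrA_nonneg (a r : ℝ) (f : ℝ → ℂ) : 0 ≤ LrA a r f := by
  rw [LrA_eq_integral_powMeasure]
  exact Real.rpow_nonneg (integral_nonneg fun y => by positivity) _

theorem LrA_congr {f g : ℝ → ℂ} (h : EqOn f g (Ioi 0)) (a r : ℝ) : LrA a r f = LrA a r g := by
  rw [LrA, LrA, setIntegral_congr_fun measurableSet_Ioi fun y hy => by rw [h hy]]

end MixedNorm

section RapidDecay

theorem integrable_one_add_sq_rpow_neg {k : ℝ} (hk : 1 / 2 < k) :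
    Integrable fun y : ℝ => (1 + y ^ 2) ^ (-k) := by
  have h := integrable_rpow_neg_one_add_norm_sq (E := ℝ) (μ := volume) (r := 2 * k)
    (by rw [Module.finrank_self]; norm_num; linarith)
  simpa only [Real.norm_eq_abs, sq_abs, neg_mul, neg_div, mul_div_cancel_left₀ k two_ne_zero]
    using h

theorem rpow_le_one_add_sq_rpow {y s : ℝ} (hy : 0 ≤ y) (hs : 0 ≤ s) :
    y ^ s ≤ (1 + y ^ 2) ^ (s / 2) := by
  calc y ^ s = (y ^ 2) ^ (s / 2) := by
        rw [← Real.rpow_natCast, ← Real.rpow_mul hy, Nat.cast_two, mul_div_cancel₀ s two_ne_zero]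
    _ ≤ (1 + y ^ 2) ^ (s / 2) := by
        gcongr
        linarith

theorem integrable_one_add_sq_rpow_neg_powMeasure {s k : ℝ} (hs : 0 ≤ s) (hk : (s + 1) / 2 < k) :
    Integrable (fun y : ℝ => (1 + y ^ 2) ^ (-k)) (powMeasure s) := by
  rw [integrable_powMeasure_iff]
  have hdom := (integrable_one_add_sq_rpow_neg (k := k - s / 2) (by linarith)).integrableOn
    (s := Ioi 0)
  have hmeas : Measurable fun y : ℝ => y ^ s • (1 + y ^ 2) ^ (-k) := by
    simp only [smul_eq_mul]; fun_prop
  refine hdom.mono' hmeas.aestronglyMeasurable ?_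
  filter_upwards [ae_restrict_mem measurableSet_Ioi] with y hy
  have hy : 0 < y := hy
  rw [smul_eq_mul, Real.norm_of_nonneg (by positivity), neg_sub, sub_eq_add_neg,
    Real.rpow_add (by positivity)]
  gcongr
  exact rpow_le_one_add_sq_rpow hy.le hs

/-- Joint measurability and polynomial decay of every order in both variables: what is needed of
the functions in `𝕊⁺`, extended by zero to the line. -/
structure RapidlyDecaying (F : ℝ → ℝ → ℂ) : Prop where
  measurable : Measurable (Function.uncurry F)
  decay : ∀ m : ℝ, 0 ≤ m → ∃ C : ℝ, 0 ≤ C ∧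
    ∀ y t, ‖F y t‖ ≤ C * ((1 + y ^ 2) ^ (-m) * (1 + t ^ 2) ^ (-m))

namespace RapidlyDecaying

variable {F : ℝ → ℝ → ℂ} {s c k : ℝ}

theorem measurable_slice (hF : RapidlyDecaying F) (t : ℝ) : Measurable fun y => F y t :=
  hF.measurable.comp measurable_prodMk_right

theorem exists_norm_rpow_le (hF : RapidlyDecaying F) (hc : 0 < c) (hk : 0 ≤ k) :
    ∃ C : ℝ, 0 ≤ C ∧ ∀ y t, ‖F y t‖ ^ c ≤ (1 + y ^ 2) ^ (-k) * (C * (1 + t ^ 2) ^ (-k)) := by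
  obtain ⟨C, hC, hdecay⟩ := hF.decay (k / c) (by positivity)
  have hpow (x : ℝ) : ((1 + x ^ 2) ^ (-(k / c))) ^ c = (1 + x ^ 2) ^ (-k) := by
    rw [← Real.rpow_mul (by positivity), neg_mul, div_mul_cancel₀ k hc.ne']
  refine ⟨C ^ c, by positivity, fun y t => ?_⟩
  calc ‖F y t‖ ^ c ≤ (C * ((1 + y ^ 2) ^ (-(k / c)) * (1 + t ^ 2) ^ (-(k / c)))) ^ c := by
        gcongr
        exact hdecay y t
    _ = (1 + y ^ 2) ^ (-k) * (C ^ c * (1 + t ^ 2) ^ (-k)) := by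
        rw [Real.mul_rpow hC (by positivity), Real.mul_rpow (by positivity) (by positivity), hpow,
          hpow, mul_left_comm]

theorem integrable_norm_rpow (hF : RapidlyDecaying F) (hs : 0 ≤ s) (hc : 0 < c) (t : ℝ) :
    Integrable (fun y => ‖F y t‖ ^ c) (powMeasure s) := by
  obtain ⟨C, -, hle⟩ := hF.exists_norm_rpow_le hc (k := (s + 1) / 2 + 1) (by positivity)
  have hdom := (integrable_one_add_sq_rpow_neg_powMeasure hs (lt_add_one _)).mul_const
    (C * (1 + t ^ 2) ^ (-((s + 1) / 2 + 1)))
  have hmeas : Measurable fun y => ‖F y t‖ ^ c := (hF.measurable_slice t).norm.pow_const c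
  refine hdom.mono' hmeas.aestronglyMeasurable (Eventually.of_forall fun y => ?_)
  rw [Real.norm_of_nonneg (by positivity)]
  exact hle y t

theorem finiteMoments_slice (hF : RapidlyDecaying F) (hs : 0 ≤ s) (t : ℝ) :
    FiniteMoments (fun y => F y t) (powMeasure s) :=
  ⟨hF.measurable_slice t, fun _ hc => hF.integrable_norm_rpow hs hc t⟩

theorem exists_integral_norm_rpow_le (hF : RapidlyDecaying F) (hs : 0 ≤ s) (hc : 0 < c)
    (hk : 0 ≤ k) :
    ∃ D : ℝ, 0 ≤ D ∧ ∀ t, ∫ y, ‖F y t‖ ^ c ∂powMeasure s ≤ D * (1 + t ^ 2) ^ (-k) := by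
  obtain ⟨C, hC, hle⟩ := hF.exists_norm_rpow_le hc (k := k + ((s + 1) / 2 + 1)) (by positivity)
  have hi := integrable_one_add_sq_rpow_neg_powMeasure (k := k + ((s + 1) / 2 + 1)) hs (by linarith)
  refine ⟨(∫ y, (1 + y ^ 2) ^ (-(k + ((s + 1) / 2 + 1))) ∂powMeasure s) * C,
    mul_nonneg (integral_nonneg fun y => by positivity) hC, fun t => ?_⟩
  refine (integral_mono (hF.integrable_norm_rpow hs hc t) (hi.mul_const _)
    fun y => hle y t).trans ?_
  rw [integral_mul_const, mul_assoc]
  gcongr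
  · nlinarith [sq_nonneg t]
  · linarith

theorem measurable_LrA (hF : RapidlyDecaying F) (s p : ℝ) :
    Measurable fun t => LrA s p fun y => F y t := by
  have h : Measurable fun q : ℝ × ℝ => ‖F q.2 q.1‖ ^ p :=
    (hF.measurable.comp measurable_swap).norm.pow_const p
  simp only [LrA_eq_integral_powMeasure]
  exact h.stronglyMeasurable.integral_prod_right'.measurable.pow_const _

theorem integrable_LrA_rpow (hF : RapidlyDecaying F) (hs : 0 ≤ s) {p Q : ℝ} (hp : 0 < p)
    (hQ : 0 < Q) : Integrable fun t => (LrA s p fun y => F y t) ^ Q := by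
  obtain ⟨D, hD, hle⟩ := hF.exists_integral_norm_rpow_le hs hp (k := p / Q) (by positivity)
  have hdom := (integrable_one_add_sq_rpow_neg one_half_lt_one).const_mul (D ^ (Q / p))
  refine hdom.mono' ((hF.measurable_LrA s p).pow_const Q).aestronglyMeasurable
    (Eventually.of_forall fun t => ?_)
  have h0 : 0 ≤ ∫ y, ‖F y t‖ ^ p ∂powMeasure s := integral_nonneg fun y => by positivity
  rw [Real.norm_of_nonneg (Real.rpow_nonneg (LrA_nonneg _ _ _) _), LrA_eq_integral_powMeasure,
    ← Real.rpow_mul h0, one_div_mul_eq_div]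
  calc (∫ y, ‖F y t‖ ^ p ∂powMeasure s) ^ (Q / p) ≤ (D * (1 + t ^ 2) ^ (-(p / Q))) ^ (Q / p) := by
        gcongr
        exact hle t
    _ = D ^ (Q / p) * (1 + t ^ 2) ^ (-1 : ℝ) := by
        rw [Real.mul_rpow hD (by positivity), ← Real.rpow_mul (by positivity), neg_mul,
          div_mul_div_cancel₀ hQ.ne', div_self hp.ne']

end RapidlyDecaying

end RapidDecay

section TimeTTStar

variable {X Y : Type*} [MeasurableSpace X] [MeasurableSpace Y] {μ : Measure X} {m : Measure Y}

theorem lintegral_enorm_integral_sq_le [IsFiniteMeasure μ] [SFinite m] {Φ : X → Y → ℂ} {N : Y → ℝ}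
    (hΦ : Measurable (Function.uncurry Φ)) (hN : Integrable N m) (hΦN : ∀ x y, ‖Φ x y‖ ≤ N y) :
    ∫⁻ x, ‖∫ y, Φ x y ∂m‖ₑ ^ 2 ∂μ ≤ ∫⁻ y, ∫⁻ z, ‖gramKernel μ Φ Φ y z‖ₑ ∂m ∂m := by
  have hmeas : Measurable fun x => ∫ y, Φ x y ∂m :=
    hΦ.stronglyMeasurable.integral_prod_right.measurable
  have hint : Integrable (fun x => ‖∫ y, Φ x y ∂m‖ ^ 2) μ :=
    .of_bound (hmeas.norm.pow_const 2).aestronglyMeasurable ((∫ y, N y ∂m) ^ 2)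
      (Eventually.of_forall fun x => by
        rw [norm_pow, norm_norm]
        gcongr
        exact norm_integral_le_of_norm_le hN (Eventually.of_forall (hΦN x)))
  have hsq : ((∫ x, ‖∫ y, Φ x y ∂m‖ ^ 2 ∂μ : ℝ) : ℂ) =
      ∫ p : Y × Y, gramKernel μ Φ Φ p.1 p.2 ∂m.prod m := by
    refine Eq.trans ?_ (integral_mul_conj_integral hΦ hΦ hN hN hΦN hΦN)
    simp only [Complex.mul_conj', ← integral_complex_ofReal, Complex.ofReal_pow]
  have hgram : AEMeasurable (fun p : Y × Y => ‖gramKernel μ Φ Φ p.1 p.2‖ₑ) (m.prod m) :=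
    (measurable_gramKernel hΦ hΦ).enorm.aemeasurable
  calc ∫⁻ x, ‖∫ y, Φ x y ∂m‖ₑ ^ 2 ∂μ = ‖∫ x, ‖∫ y, Φ x y ∂m‖ ^ 2 ∂μ‖ₑ := by
        rw [Real.enorm_of_nonneg (integral_nonneg fun x => sq_nonneg _),
          ofReal_integral_eq_lintegral_ofReal hint (Eventually.of_forall fun x => sq_nonneg _)]
        simp only [ENNReal.ofReal_pow (norm_nonneg _), ofReal_norm]
    _ = ‖∫ p : Y × Y, gramKernel μ Φ Φ p.1 p.2 ∂m.prod m‖ₑ := by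
        rw [← hsq, ← ofReal_norm, ← ofReal_norm, Complex.norm_real]
    _ ≤ ∫⁻ p : Y × Y, ‖gramKernel μ Φ Φ p.1 p.2‖ₑ ∂m.prod m :=
        enorm_integral_le_lintegral_enorm _
    _ = ∫⁻ y, ∫⁻ z, ‖gramKernel μ Φ Φ y z‖ₑ ∂m ∂m := lintegral_prod _ hgram

theorem lintegral_enorm_integral_sq_le_of_dispersive [IsFiniteMeasure μ] {s : Set ℝ}
    {Φ : X → ℝ → ℂ} {N u : ℝ → ℝ} {A γ p : ℝ} (hΦ : Measurable (Function.uncurry Φ))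
    (hN : IntegrableOn N s) (hΦN : ∀ x t, ‖Φ x t‖ ≤ N t) (hu : Measurable u) (hu0 : ∀ t, 0 ≤ u t)
    (hA : 0 ≤ A) (hγ0 : 0 < γ) (hγ1 : γ < 1) (hp : p = 2 / (2 - γ))
    (hdisp : ∀ᵐ t, ∀ᵐ t', ‖gramKernel μ Φ Φ t t'‖ ≤ A * (u t * u t' * |t - t'| ^ (-γ))) :
    ∫⁻ x, ‖∫ t in s, Φ x t‖ₑ ^ 2 ∂μ ≤
      ENNReal.ofReal (A * (2 * (2 / (1 - γ) + 2 ^ (γ / 2)))) *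
        (∫⁻ t, ENNReal.ofReal (u t) ^ p) ^ (2 - γ) := by
  calc ∫⁻ x, ‖∫ t in s, Φ x t‖ₑ ^ 2 ∂μ
      ≤ ∫⁻ t in s, ∫⁻ t' in s, ‖gramKernel μ Φ Φ t t'‖ₑ :=
        lintegral_enorm_integral_sq_le hΦ hN hΦN
    _ ≤ ∫⁻ t, ∫⁻ t', ‖gramKernel μ Φ Φ t t'‖ₑ :=
        (setLIntegral_le_lintegral _ _).trans
          (lintegral_mono fun t => setLIntegral_le_lintegral _ _)
    _ ≤ ∫⁻ t, ∫⁻ t', ENNReal.ofReal A * (ENNReal.ofReal (u t) * ENNReal.ofReal (u t') *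
          ENNReal.ofReal (|t - t'| ^ (-γ))) := by
        refine lintegral_mono_ae (hdisp.mono fun t ht => lintegral_mono_ae (ht.mono fun t' h => ?_))
        rw [← ofReal_norm, ← ENNReal.ofReal_mul (hu0 t),
          ← ENNReal.ofReal_mul (mul_nonneg (hu0 t) (hu0 t')), ← ENNReal.ofReal_mul hA]
        exact ENNReal.ofReal_le_ofReal h
    _ = ENNReal.ofReal A * ∫⁻ t, ∫⁻ t', ENNReal.ofReal (u t) * ENNReal.ofReal (u t') *
          ENNReal.ofReal (|t - t'| ^ (-γ)) := by
        simp only [lintegral_const_mul' _ _ ENNReal.ofReal_ne_top]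
    _ ≤ _ := by
        rw [ENNReal.ofReal_mul hA, mul_assoc]
        gcongr
        exact lintegral_lintegral_mul_abs_sub_rpow_le hu.ennreal_ofReal hγ0 hγ1 hp

end TimeTTStar

section Truncation

variable {G : ℝ → ℝ → ℂ}

theorem tendsto_setIntegral_lt_abs {g : ℝ → ℂ} (hg : Integrable g) {ε : ℕ → ℝ}
    (hε : Tendsto ε atTop (nhds 0)) :
    Tendsto (fun n => ∫ t in {t | ε n < |t|}, g t) atTop (nhds (∫ t, g t)) := by
  have hmeas (n : ℕ) : MeasurableSet {t : ℝ | ε n < |t|} :=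
    measurableSet_lt measurable_const measurable_norm
  simp only [← integral_indicator (hmeas _)]
  refine tendsto_integral_of_dominated_convergence (fun t => ‖g t‖)
    (fun n => hg.aestronglyMeasurable.indicator (hmeas n)) hg.norm
    (fun n => Eventually.of_forall fun t => norm_indicator_le_norm_self _ _) ?_
  filter_upwards [Measure.ae_ne volume (0 : ℝ)] with t ht
  refine tendsto_const_nhds.congr' ?_
  filter_upwards [hε.eventually (gt_mem_nhds (abs_pos.2 ht))] with n hn
  exact (indicator_of_mem (s := {t : ℝ | ε n < |t|}) hn g).symm

theorem enorm_integral_sq_le_liminf (g : ℝ → ℂ) (x : ℝ) {δ : ℕ → ℝ}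
    (hδ : Tendsto δ atTop (nhds 0)) :
    ‖∫ t, g t‖ₑ ^ 2 ≤ liminf (fun n => ENNReal.ofReal (Real.exp (-δ n * x ^ 2)) *
      ‖∫ t in {t | δ n < |t|}, g t‖ₑ ^ 2) atTop := by
  by_cases hg : Integrable g
  · have hexp : Tendsto (fun n => Real.exp (-δ n * x ^ 2)) atTop (nhds 1) := by
      simpa using (hδ.neg.mul_const (x ^ 2)).rexp
    have hlim := ENNReal.Tendsto.mul (ENNReal.tendsto_ofReal hexp) (by simp)
      (((tendsto_setIntegral_lt_abs hg hδ).enorm).ennrpow_const 2) (by simp)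
    simp only [ENNReal.ofReal_one, one_mul, ENNReal.rpow_two] at hlim
    exact hlim.liminf_eq.ge
  · -- the integral on the left is the junk value `0`
    simp [integral_undef hg]

theorem lintegral_gaussPowMeasure (δ s : ℝ) {f : ℝ → ENNReal} (hf : Measurable f) :
    ∫⁻ x, f x ∂gaussPowMeasure δ s =
      ∫⁻ x, ENNReal.ofReal (Real.exp (-δ * x ^ 2)) * f x ∂powMeasure s :=
  lintegral_withDensity_eq_lintegral_mul _ (by fun_prop) hf

-- Fatou's lemma along `δ = 1 / (n + 1)`.
theorem lintegral_enorm_integral_sq_le_of_truncated {s : ℝ} {B : ENNReal}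
    (hG : Measurable (Function.uncurry G))
    (hB : ∀ δ > 0, ∫⁻ x, ‖∫ t in {t | δ < |t|}, G x t‖ₑ ^ 2 ∂gaussPowMeasure δ s ≤ B) :
    ∫⁻ x, ‖∫ t, G x t‖ₑ ^ 2 ∂powMeasure s ≤ B := by
  have hmeas (δ : ℝ) : Measurable fun x => ‖∫ t in {t | δ < |t|}, G x t‖ₑ ^ 2 :=
    hG.stronglyMeasurable.integral_prod_right.measurable.enorm.pow_const 2
  simp only [lintegral_gaussPowMeasure _ _ (hmeas _)] at hB
  have hfatou := lintegral_liminf_le (μ := powMeasure s) (u := atTop)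
    (f := fun (n : ℕ) x => ENNReal.ofReal (Real.exp (-(1 / (n + 1 : ℝ)) * x ^ 2)) *
      ‖∫ t in {t | 1 / (n + 1 : ℝ) < |t|}, G x t‖ₑ ^ 2)
    fun n => Measurable.mul (by fun_prop) (hmeas _)
  refine (lintegral_mono fun x => enorm_integral_sq_le_liminf (G x) x
    tendsto_one_div_add_atTop_nhds_zero_nat).trans (hfatou.trans ?_)
  exact liminf_le_of_frequently_le' (Frequently.of_forall fun n => hB _ Nat.one_div_pos_of_nat)

end Truncation

section PropagatedSource

variable {F : ℝ → ℝ → ℂ} {ν δ p q r γ t t' : ℝ}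

/-- `T_a(F)(x)` before the time integration, for `a = 2ν + 1`: the slice `F(·, t)` transported by
the Schrödinger flow from time `t` to time `0`. -/
noncomputable def propagatedSource (ν : ℝ) (F : ℝ → ℝ → ℂ) (x t : ℝ) : ℂ :=
  kernelOp (powMeasure (2 * ν + 1)) (fresnelKernel ν (4 * t)⁻¹) (fun y => F y t) x

theorem measurable_uncurry_propagatedSource (ν : ℝ) (hF : Measurable (Function.uncurry F)) :
    Measurable (Function.uncurry (propagatedSource ν F)) := by
  have hK : Measurable fun w : (ℝ × ℝ) × ℝ => fresnelKernel ν (4 * w.1.2)⁻¹ w.1.1 w.2 :=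
    measurable_fresnelKernel ν (by fun_prop) (by fun_prop) measurable_snd
  have hF' : Measurable fun w : (ℝ × ℝ) × ℝ => F w.2 w.1.2 :=
    hF.comp (measurable_snd.prodMk measurable_fst.snd)
  exact (hK.mul hF').stronglyMeasurable.integral_prod_right'.measurable

theorem exists_integrableOn_norm_propagatedSource_le (hν : -1 / 2 ≤ ν) (hF : RapidlyDecaying F)
    (hδ : 0 < δ) :
    ∃ N : ℝ → ℝ, IntegrableOn N {t | δ < |t|} ∧ ∀ x t, ‖propagatedSource ν F x t‖ ≤ N t := by
  obtain ⟨D, -, hle⟩ :=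
    hF.exists_integral_norm_rpow_le (s := 2 * ν + 1) (by linarith) one_pos zero_le_one
  have hΓ : 0 < Real.Gamma (ν + 1) := Real.Gamma_pos_of_pos (by linarith)
  simp only [Real.rpow_one] at hle
  refine ⟨fun t => 2 * |(4 * t)⁻¹| ^ (ν + 1) * (Real.Gamma (ν + 1))⁻¹ *
    (D * (1 + t ^ 2) ^ (-1 : ℝ)), ?_, fun x t => ?_⟩
  · refine (((integrable_one_add_sq_rpow_neg one_half_lt_one).const_mul D).integrableOn.bdd_mul
      (c := 2 * (4 * δ)⁻¹ ^ (ν + 1) * (Real.Gamma (ν + 1))⁻¹)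
      (Measurable.aestronglyMeasurable (by fun_prop)) ?_)
    filter_upwards [ae_restrict_mem (measurableSet_lt measurable_const measurable_norm)] with t ht
    rw [Real.norm_of_nonneg (by positivity), abs_inv, abs_mul, abs_of_pos four_pos]
    gcongr
    linarith
  · exact (norm_kernelOp_le (norm_fresnelKernel_le hν _)
      (hF.finiteMoments_slice (by linarith) t).integrable x).trans
        (mul_le_mul_of_nonneg_left (hle t) (by positivity))

theorem abs_inv_mul_abs_inv_div_abs_sub (ht : t ≠ 0) (ht' : t' ≠ 0) :
    |(4 * t)⁻¹| * |(4 * t')⁻¹| / |(4 * t)⁻¹ - (4 * t')⁻¹| = 4⁻¹ * |t - t'|⁻¹ := by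
  have hsub : (4 * t)⁻¹ - (4 * t')⁻¹ = 4 * ((4 * t)⁻¹ * (4 * t')⁻¹) * (t' - t) := by
    field_simp
  have hτ : |(4 * t)⁻¹| * |(4 * t')⁻¹| ≠ 0 := by positivity
  rw [hsub, abs_mul, abs_mul, abs_mul, abs_of_pos (four_pos : (0 : ℝ) < 4), mul_right_comm,
    abs_sub_comm, div_mul_cancel_right₀ hτ, mul_inv]

theorem norm_gramKernel_propagatedSource_le (hν : -1 / 2 ≤ ν) (hδ : 0 < δ)
    (hF : RapidlyDecaying F) (hp : 1 ≤ p) (hp2 : p ≤ 2) (ht : t ≠ 0) (ht' : t' ≠ 0)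
    (htt' : t ≠ t') :
    ‖gramKernel (gaussPowMeasure δ (2 * ν + 1)) (propagatedSource ν F) (propagatedSource ν F)
        t t'‖ ≤
      (2 * 4⁻¹ ^ (ν + 1) * (Real.Gamma (ν + 1))⁻¹) ^ (2 / p - 1) *
        ((LrA (2 * ν + 1) p fun y => F y t) * (LrA (2 * ν + 1) p fun y => F y t') *
          |t - t'| ^ (-((ν + 1) * (2 / p - 1)))) := by
  have := isFiniteMeasure_gaussPowMeasure (s := 2 * ν + 1) (by linarith) hδ
  have hΓ : 0 < Real.Gamma (ν + 1) := Real.Gamma_pos_of_pos (by linarith)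
  have hslice := hF.finiteMoments_slice (s := 2 * ν + 1) (by linarith)
  have hτ : (4 * t)⁻¹ ≠ 0 := by positivity
  have hτ' : (4 * t')⁻¹ ≠ 0 := by positivity
  have hne : (4 * t)⁻¹ ≠ (4 * t')⁻¹ := by simpa
  have hmeas (τ : ℝ) := measurable_uncurry_fresnelKernel ν τ
  have hinterp := norm_integral_mul_conj_le_interpolated
    (k := fun p : ℝ × ℝ => gramKernel (gaussPowMeasure δ (2 * ν + 1))
      (fresnelKernel ν (4 * t)⁻¹) (fresnelKernel ν (4 * t')⁻¹) p.1 p.2)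
    (measurable_gramKernel (hmeas _) (hmeas _)) (by positivity)
    (fun p => norm_gramKernel_fresnelKernel_le hν hδ hne p.1 p.2)
    (fun f g hf hg => norm_integral_gramKernel_fresnelKernel_mul_le hν hδ hτ hτ' hf.measurable
      hg.measurable hf.integrable hg.integrable hf.integrable_norm_sq hg.integrable_norm_sq)
    (hslice t) (hslice t') hp hp2
  rw [← integral_kernelOp_mul_conj (hmeas _) (hmeas _) (norm_fresnelKernel_le hν _)
    (norm_fresnelKernel_le hν _) (hslice t).measurable (hslice t').measurable (hslice t).integrable
    (hslice t').integrable, abs_inv_mul_abs_inv_div_abs_sub ht ht'] at hinterp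
  have hdist : 2 * (4⁻¹ * |t - t'|⁻¹) ^ (ν + 1) * (Real.Gamma (ν + 1))⁻¹ =
      2 * 4⁻¹ ^ (ν + 1) * (Real.Gamma (ν + 1))⁻¹ * |t - t'| ^ (-(ν + 1)) := by
    rw [Real.mul_rpow (by positivity) (by positivity), Real.inv_rpow (abs_nonneg _),
      Real.rpow_neg (abs_nonneg _)]
    ring
  refine hinterp.trans_eq ?_
  rw [hdist, LrA_eq_integral_powMeasure, LrA_eq_integral_powMeasure,
    Real.mul_rpow (by positivity) (by positivity), ← Real.rpow_mul (abs_nonneg _), neg_mul,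
    Real.mul_rpow (integral_nonneg fun y => by positivity) (integral_nonneg fun y => by positivity)]
  ring

theorem lintegral_enorm_integral_propagatedSource_sq_le (hν : -1 / 2 ≤ ν) (hF : RapidlyDecaying F)
    (hr : 1 ≤ r) (hr2 : r ≤ 2) (hγ : γ = (ν + 1) * (2 / r - 1)) (hγ0 : 0 < γ) (hγ1 : γ < 1)
    (hq : q = 2 / (2 - γ)) :
    ∫⁻ x, ‖∫ t, propagatedSource ν F x t‖ₑ ^ 2 ∂powMeasure (2 * ν + 1) ≤
      ENNReal.ofReal ((2 * 4⁻¹ ^ (ν + 1) * (Real.Gamma (ν + 1))⁻¹) ^ (2 / r - 1) *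
        (2 * (2 / (1 - γ) + 2 ^ (γ / 2)))) *
      (∫⁻ t, ENNReal.ofReal (LrA (2 * ν + 1) r fun y => F y t) ^ q) ^ (2 - γ) := by
  have hΓ : 0 < Real.Gamma (ν + 1) := Real.Gamma_pos_of_pos (by linarith)
  refine lintegral_enorm_integral_sq_le_of_truncated
    (measurable_uncurry_propagatedSource ν hF.measurable) fun δ hδ => ?_
  have := isFiniteMeasure_gaussPowMeasure (s := 2 * ν + 1) (by linarith) hδ
  obtain ⟨N, hN, hle⟩ := exists_integrableOn_norm_propagatedSource_le hν hF hδ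
  refine lintegral_enorm_integral_sq_le_of_dispersive
    (measurable_uncurry_propagatedSource ν hF.measurable) hN hle (hF.measurable_LrA _ r)
    (fun t => LrA_nonneg _ _ _) (by positivity) hγ0 hγ1 hq ?_
  filter_upwards [Measure.ae_ne volume (0 : ℝ)] with t ht
  filter_upwards [Measure.ae_ne volume (0 : ℝ), Measure.ae_ne volume t] with t' ht' htt'
  rw [hγ]
  exact norm_gramKernel_propagatedSource_le hν hδ hF hr hr2 ht ht' htt'.symm

theorem LrA_two_sq_eq_toReal_lintegral (a : ℝ) {g : ℝ → ℂ} (hg : Measurable g) :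
    LrA a 2 g ^ 2 = (∫⁻ x, ‖g x‖ₑ ^ 2 ∂powMeasure a).toReal := by
  have h0 : 0 ≤ ∫ x, ‖g x‖ ^ 2 ∂powMeasure a := integral_nonneg fun x => sq_nonneg _
  simp only [LrA_eq_integral_powMeasure, Real.rpow_two, ← Real.sqrt_eq_rpow]
  rw [Real.sq_sqrt h0, integral_eq_lintegral_of_nonneg_ae
    (Eventually.of_forall fun x => sq_nonneg _) (hg.norm.pow_const 2).aestronglyMeasurable]
  simp only [ENNReal.ofReal_pow (norm_nonneg _), ofReal_norm]

theorem lintegral_LrA_rpow_eq_mixedNorm {a : ℝ} (ha : 0 ≤ a) (hF : RapidlyDecaying F) (hr : 0 < r)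
    (hq : 0 < q) :
    (∫⁻ t, ENNReal.ofReal (LrA a r fun y => F y t) ^ q) ^ (2 / q) =
      ENNReal.ofReal (mixedNorm a q r F ^ 2) := by
  have h0 (t : ℝ) : 0 ≤ (LrA a r fun y => F y t) ^ q := Real.rpow_nonneg (LrA_nonneg _ _ _) _
  simp only [ENNReal.ofReal_rpow_of_nonneg (LrA_nonneg _ _ _) hq.le]
  rw [← ofReal_integral_eq_lintegral_ofReal (hF.integrable_LrA_rpow ha hr hq)
    (Eventually.of_forall h0), ENNReal.ofReal_rpow_of_nonneg (integral_nonneg h0) (by positivity),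
    mixedNorm, ← Real.rpow_mul_natCast (integral_nonneg h0)]
  congr 2
  push_cast
  ring

theorem exists_LrA_integral_propagatedSource_le (hν : -1 / 2 ≤ ν) (hr : 1 ≤ r) (hr2 : r ≤ 2)
    (hγ : γ = (ν + 1) * (2 / r - 1)) (hγ0 : 0 < γ) (hγ1 : γ < 1) (hq : q = 2 / (2 - γ)) :
    ∃ C > 0, ∀ F, RapidlyDecaying F →
      LrA (2 * ν + 1) 2 (fun x => ∫ t, propagatedSource ν F x t) ≤
        C * mixedNorm (2 * ν + 1) q r F := by
  have hΓ : 0 < Real.Gamma (ν + 1) := Real.Gamma_pos_of_pos (by linarith)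
  have h2γ : 0 < 2 - γ := by linarith
  have hq0 : 0 < q := by rw [hq]; positivity
  set A := (2 * 4⁻¹ ^ (ν + 1) * (Real.Gamma (ν + 1))⁻¹) ^ (2 / r - 1) *
    (2 * (2 / (1 - γ) + 2 ^ (γ / 2)))
  have hA0 : 0 < A := by positivity
  refine ⟨√A, Real.sqrt_pos.2 hA0, fun F hF => ?_⟩
  have hmain := lintegral_enorm_integral_propagatedSource_sq_le hν hF hr hr2 hγ hγ0 hγ1 hq
  have hmeas : Measurable fun x => ∫ t, propagatedSource ν F x t :=
    (measurable_uncurry_propagatedSource ν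
      hF.measurable).stronglyMeasurable.integral_prod_right.measurable
  have hmixed : 0 ≤ mixedNorm (2 * ν + 1) q r F :=
    Real.rpow_nonneg (integral_nonneg fun t => Real.rpow_nonneg (LrA_nonneg _ _ _) _) _
  rw [show 2 - γ = 2 / q by rw [hq, div_div_cancel₀ two_ne_zero],
    lintegral_LrA_rpow_eq_mixedNorm (by linarith) hF (by linarith) hq0,
    ← ENNReal.ofReal_mul hA0.le] at hmain
  refine abs_le_of_sq_le_sq' ?_ (by positivity) |>.2
  rw [LrA_two_sq_eq_toReal_lintegral _ hmeas, mul_pow, Real.sq_sqrt hA0.le]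
  exact ENNReal.toReal_le_of_le_ofReal (by positivity) hmain

end PropagatedSource

section SPlus

theorem one_add_sq_rpow_mul_le {m n : ℝ} (hm : 0 ≤ m) (hn : 4 * m ≤ n) (y t : ℝ) :
    (1 + y ^ 2) ^ m * (1 + t ^ 2) ^ m ≤ (1 + y ^ 2 + t ^ 2) ^ (n / 2) := by
  calc (1 + y ^ 2) ^ m * (1 + t ^ 2) ^ m
      ≤ (1 + y ^ 2 + t ^ 2) ^ m * (1 + y ^ 2 + t ^ 2) ^ m := by
        gcongr ?_ ^ m * ?_ ^ m <;> linarith [sq_nonneg y, sq_nonneg t]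
    _ = (1 + y ^ 2 + t ^ 2) ^ (m + m) := (Real.rpow_add (by positivity) _ _).symm
    _ ≤ (1 + y ^ 2 + t ^ 2) ^ (n / 2) := by
        gcongr <;> linarith [sq_nonneg y, sq_nonneg t]

theorem rapidlyDecaying_indicator_of_SPlusT {F : ℝ → ℝ → ℂ} (hF : SPlusT F) :
    RapidlyDecaying fun y t => (Ioi 0).indicator (fun y => F y t) y where
  measurable := by
    classical
    have hset : MeasurableSet (Ioi (0 : ℝ) ×ˢ (univ : Set ℝ)) := measurableSet_Ioi.prod .univ
    have hpiece := hF.1.continuousOn.measurable_piecewise (g := fun _ => 0) continuousOn_const hset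
    convert! hpiece using 1
    ext ⟨y, t⟩
    by_cases hy : 0 < y <;> simp [Function.uncurry, Set.piecewise, hy]
  decay m hm := by
    obtain ⟨C, hC⟩ := hF.2 ⌈4 * m⌉₊
    have hbound : ∀ y > (0 : ℝ), ∀ t,
        (1 + y ^ 2 + t ^ 2) ^ ((⌈4 * m⌉₊ : ℝ) / 2) * ‖F y t‖ ≤ C := by
      intro y hy t
      simpa [DxIter, DtIter] using hC 0 0 (by omega) y hy t
    have hC0 : 0 ≤ C := le_trans (by positivity) (hbound 1 one_pos 0)
    refine ⟨C, hC0, fun y t => ?_⟩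
    by_cases hy : 0 < y
    · have hpow := one_add_sq_rpow_mul_le hm (Nat.le_ceil (4 * m)) y t
      rw [indicator_of_mem (s := Ioi 0) hy, Real.rpow_neg (by positivity),
        Real.rpow_neg (by positivity), ← mul_inv, ← div_eq_mul_inv, le_div_iff₀ (by positivity),
        mul_comm]
      exact (mul_le_mul_of_nonneg_right hpow (norm_nonneg _)).trans (hbound y hy t)
    · rw [indicator_of_notMem (s := Ioi 0) hy, norm_zero]
      positivity

theorem integral_Skernel_eq_integral_propagatedSource {ν x : ℝ} (hx : 0 < x) (F : ℝ → ℝ → ℂ) :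
    ∫ t : ℝ, ∫ y in Ioi (0 : ℝ), Skernel (2 * ν + 1) x y (-t) * F y t *
        ((y ^ (2 * ν + 1) : ℝ) : ℂ) =
      ∫ t, propagatedSource ν (fun y t => (Ioi 0).indicator (fun y => F y t) y) x t := by
  refine integral_congr_ae ?_
  filter_upwards [Measure.ae_ne volume (0 : ℝ)] with t ht
  rw [propagatedSource, kernelOp, integral_powMeasure]
  refine setIntegral_congr_fun measurableSet_Ioi fun y hy => ?_
  rw [indicator_of_mem hy, Skernel_neg_eq_fresnelKernel ht hx hy, Complex.real_smul, mul_comm]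

theorem Admissible.conj_exponents {a q r : ℝ} (ha : 0 ≤ a) (h : Admissible a q r) :
    0 < 2 / q ∧ 2 / q < 1 ∧ q / (q - 1) = 2 / (2 - 2 / q) ∧
      1 ≤ r / (r - 1) ∧ r / (r - 1) ≤ 2 ∧ 2 / q = (a + 1) / 2 * (2 / (r / (r - 1)) - 1) := by
  obtain ⟨hr, hra, hq⟩ := h
  have hr0 : 0 < r - 1 := by linarith
  have hq0 : 0 < 2 / q := by
    rw [hq]
    refine mul_pos (by linarith) (sub_pos.2 ?_)
    gcongr
  have hq1 : 2 / q < 1 := by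
    rw [hq]
    rcases le_or_gt a 1 with h1 | h1
    · have : 0 < 1 / r := by positivity
      nlinarith
    · have hra := hra h1
      rw [lt_div_iff₀ (by linarith)] at hra
      field_simp
      linarith
  have hqpos : 0 < q := (div_pos_iff_of_pos_left two_pos).1 hq0
  have hq2 : 2 < q := (div_lt_one hqpos).1 hq1
  have hq' : 0 < q - 1 := by linarith
  refine ⟨hq0, hq1, ?_, (one_le_div hr0).2 (by linarith), (div_le_iff₀ hr0).2 (by linarith), ?_⟩
  · field_simp
  · rw [hq]
    field_simp
    ring

end SPlus

/-- Restriction-type estimate for `T_a`: for `a ≥ 0` and an `a`-admissible pair `(q,r)`,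
`‖T_a(F)‖_{L²_a} ≤ C(a,r) ‖F‖_{L^{q'}_t L^{r'}_a}` for `F ∈ 𝕊⁺`. -/
theorem Ta_estimate (a q r : ℝ) (ha : 0 ≤ a) (hadm : Admissible a q r) :
    ∃ C > (0:ℝ), ∀ F : ℝ → ℝ → ℂ, SPlusT F →
      LrA a 2 (fun x =>
          ∫ t : ℝ, ∫ y in Ioi (0:ℝ), Skernel a x y (-t) * F y t * ((y ^ a : ℝ) : ℂ)) ≤
        C * mixedNorm a (q / (q - 1)) (r / (r - 1)) F := by
  obtain ⟨hγ0, hγ1, hq, hr, hr2, hγ⟩ := hadm.conj_exponents ha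
  obtain ⟨ν, rfl⟩ : ∃ ν, a = 2 * ν + 1 := ⟨(a - 1) / 2, by ring⟩
  rw [show (2 * ν + 1 + 1) / 2 = ν + 1 by ring] at hγ
  obtain ⟨C, hC, hbound⟩ :=
    exists_LrA_integral_propagatedSource_le (by linarith) hr hr2 hγ hγ0 hγ1 hq
  refine ⟨C, hC, fun F hF => ?_⟩
  have hext (t : ℝ) : EqOn ((Ioi 0).indicator fun y => F y t) (fun y => F y t) (Ioi 0) :=
    fun y hy => indicator_of_mem hy _
  have hF' := hbound _ (rapidlyDecaying_indicator_of_SPlusT hF)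
  simp only [mixedNorm, LrA_congr (hext _)] at hF'
  rw [LrA_congr fun x hx => integral_Skernel_eq_integral_propagatedSource hx F]
  exact hF'
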